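/- arXiv:1107.4120 — 9 statements merged into one kernel-verified Lean document; each statement's English description precedes it below -/
import Mathlib

section
/- Let 𝐯 = (v₁,…,v_m) and 𝐤 = (k₁,…,k_m) be m-tuples of positive integers with kᵢ ≤ vᵢ for all i, and suppose there exists an index i with kᵢ ≥ t such that D_λ(𝐯,𝐤,t) = D_λ(vᵢ,kᵢ,t). For each j ≠ i let v′_j ≥ v_j, and let 𝐯′ be the tuple obtained from 𝐯 by replacing v_j with v′_j for all j ≠ i (keeping vᵢ in position i). Then D_λ(𝐯′,𝐤,t) = D_λ(vᵢ,kᵢ,t). -/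
/-!
The number for `v'` is bounded on both sides by the ordinary packing number of coordinate `i`.

* Above: since `t ≤ k i`, the tuple with `t` in position `i` and `0` elsewhere is admissible, so
  projecting a generalized packing to coordinate `i` gives an ordinary packing with the same number
  of blocks (`IsGenPacking.proj`).
* Below: embedding each point set `Fin (v j)` into `Fin (v' j)` carries a packing on `v` to a packing
  on `v'` of the same size (`IsGenPacking.embed`), so the number for `v'` is at least the number for
  `v`, which by hypothesis is the ordinary packing number.

The packing numbers are suprema in `ℕ`, so both steps also need packing sizes to be bounded:
every block of an ordinary packing contains a `t`-set, and each `t`-set lies in at most `lam` blocks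
(`IsGenPacking.card_le_of_ord`).
-/

open Finset

/-- A `t`-`(𝐯,𝐤,λ)` generalized packing: a multiset of blocks `B` with `|B i| = k i`,
such that for every `(𝐤,t)`-admissible tuple `t'` and every tuple of sets `T` with
`|T i| = t' i`, at most `lam` blocks contain `T` componentwise. -/
def IsGenPacking {ι : Type} [Fintype ι] [DecidableEq ι] (t lam : ℕ) (v k : ι → ℕ)
    (P : Multiset (∀ i : ι, Finset (Fin (v i)))) : Prop :=
  (∀ B ∈ P, ∀ i, (B i).card = k i) ∧
  ∀ t' : ι → ℕ, (∀ i, t' i ≤ k i) → (∑ i, t' i) = t →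
    ∀ T : ∀ i : ι, Finset (Fin (v i)), (∀ i, (T i).card = t' i) →
      (P.filter (fun B => ∀ i, T i ⊆ B i)).card ≤ lam

/-- The generalized packing number `D_λ(𝐯,𝐤,t)`. -/
noncomputable def genPackingNumber (ι : Type) [Fintype ι] [DecidableEq ι] (t lam : ℕ) (v k : ι → ℕ) : ℕ :=
  sSup {N | ∃ P, IsGenPacking t lam v k P ∧ Multiset.card P = N}

/-- The ordinary packing number `D_λ(v,k,t)`, as the case `m = 1`. -/
noncomputable def ordPackingNumber (v k t lam : ℕ) : ℕ :=
  genPackingNumber (Fin 1) t lam (fun _ => v) (fun _ => k)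

/-- Union bound for multisets. -/
lemma card_le_sum_card_filter {α β : Type*} (s : Finset α) (r : α → β → Prop)
    [∀ a, DecidablePred (r a)] (P : Multiset β) (h : ∀ b ∈ P, ∃ a ∈ s, r a b) :
    Multiset.card P ≤ ∑ a ∈ s, Multiset.card (P.filter (r a)) := by
  induction P using Multiset.induction_on with
  | empty => simp
  | cons b P ih =>
    have h1 := ih fun c hc => h c (Multiset.mem_cons_of_mem hc)
    obtain ⟨a, ha, hab⟩ := h b (Multiset.mem_cons_self b P)
    have h2 : 1 ≤ ∑ a ∈ s, (if r a b then 1 else 0) := by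
      have := Finset.single_le_sum (f := fun a => if r a b then 1 else 0)
        (fun _ _ => Nat.zero_le _) ha
      simpa [hab] using this
    have h3 : ∀ a, Multiset.card ((b ::ₘ P).filter (r a))
        = Multiset.card (P.filter (r a)) + (if r a b then 1 else 0) := by
      intro a
      by_cases hr : r a b <;> simp [hr]
    simp only [h3, Finset.sum_add_distrib, Multiset.card_cons]
    omega

/-- The decidability instances are implicit arguments, found by unification: for predicates of the
form `∀ j : Fin m, _` instance search need not find the instance used in `IsGenPacking`. -/
lemma card_filter_map_eq {α β : Type*} {g : α → β} {p : β → Prop} {q : α → Prop}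
    {hp : DecidablePred p} {hq : DecidablePred q} {P : Multiset α}
    (h : ∀ a ∈ P, p (g a) ↔ q a) :
    Multiset.card ((P.map g).filter p) = Multiset.card (P.filter q) := by
  rw [Multiset.filter_map, Multiset.card_map]
  exact congrArg _ (Multiset.filter_congr h)

lemma IsGenPacking.card_le_of_ord {t lam v k : ℕ} (htk : t ≤ k)
    {P : Multiset (∀ _ : Fin 1, Finset (Fin v))}
    (hP : IsGenPacking t lam (fun _ : Fin 1 => v) (fun _ => k) P) :
    Multiset.card P ≤ (Finset.powersetCard t (Finset.univ : Finset (Fin v))).card * lam := by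
  refine (card_le_sum_card_filter (Finset.powersetCard t Finset.univ)
    (fun T B => ∀ j : Fin 1, T ⊆ B j) P ?_).trans ?_
  · intro B hB
    obtain ⟨T, hT, hc⟩ := Finset.exists_subset_card_eq (htk.trans (hP.1 B hB 0).ge)
    refine ⟨T, by simp [Finset.mem_powersetCard, hc], fun j => ?_⟩
    rwa [Subsingleton.elim j 0]
  · rw [← smul_eq_mul]
    refine Finset.sum_le_card_nsmul _ _ _ fun T hT => ?_
    have key := hP.2 (fun _ => t) (fun _ => htk) (by simp) (fun _ => T)
      (fun _ => (Finset.mem_powersetCard.1 hT).2)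
    refine le_trans (le_of_eq ?_) key
    congr!

lemma IsGenPacking.proj {m t lam : ℕ} {v k : Fin m → ℕ} {i : Fin m} (hti : t ≤ k i)
    {P : Multiset (∀ j : Fin m, Finset (Fin (v j)))} (hP : IsGenPacking t lam v k P) :
    IsGenPacking t lam (fun _ : Fin 1 => v i) (fun _ => k i) (P.map fun B _ => B i) := by
  refine ⟨?_, ?_⟩
  · intro B hB j
    obtain ⟨C, hC, rfl⟩ := Multiset.mem_map.1 hB
    exact hP.1 C hC i
  · intro t' _ hsum T hT
    have ht' : t' 0 = t := by simpa using hsum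
    have key := hP.2 (fun j => if j = i then t else 0)
      (fun j => by
        by_cases h : j = i
        · subst h; simpa using hti
        · simp [h])
      (by simp) (Function.update (fun _ => ∅) i (T 0))
      (fun j => by
        by_cases h : j = i
        · subst h; simp [hT, ht']
        · simp [h])
    refine le_trans (le_of_eq (card_filter_map_eq fun B _ => ?_)) key
    constructor
    · intro h j
      by_cases hj : j = i
      · subst hj; simpa using h 0
      · simp [hj]
    · intro h j
      have := h i
      rw [Subsingleton.elim j 0]
      simpa using this

lemma IsGenPacking.embed {m t lam : ℕ} {v v' k : Fin m → ℕ} (f : ∀ j, Fin (v j) ↪ Fin (v' j))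
    {P : Multiset (∀ j : Fin m, Finset (Fin (v j)))} (hP : IsGenPacking t lam v k P) :
    IsGenPacking t lam v' k (P.map fun B j => (B j).map (f j)) := by
  refine ⟨?_, ?_⟩
  · intro B hB j
    obtain ⟨C, hC, rfl⟩ := Multiset.mem_map.1 hB
    simpa using hP.1 C hC j
  · intro t' ht' hsum T hT
    -- A tuple `T` that does not come from `v` lies in no image block.
    by_cases hex : ∃ S : ∀ j, Finset (Fin (v j)), ∀ j, T j = (S j).map (f j)
    · obtain ⟨S, hS⟩ := hex
      refine le_trans (le_of_eq (card_filter_map_eq fun B _ => ?_))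
        (hP.2 t' ht' hsum S fun j => by rw [← hT j, hS j, card_map])
      simp [hS]
    · rw [card_filter_map_eq (q := fun _ => False) (hq := fun _ => instDecidableFalse)]
      · simp
      · refine fun B _ => iff_false_intro fun hB => hex ?_
        choose S hS using fun j => Finset.subset_map_iff.1 (hB j)
        exact ⟨S, fun j => (hS j).2⟩

lemma bddAbove_packing_ord {t lam v k : ℕ} (htk : t ≤ k) :
    BddAbove {N | ∃ P, IsGenPacking t lam (fun _ : Fin 1 => v) (fun _ => k) P ∧
      Multiset.card P = N} :=
  ⟨_, by rintro N ⟨P, hP, rfl⟩; exact hP.card_le_of_ord htk⟩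

lemma bddAbove_packing {m t lam : ℕ} {v k : Fin m → ℕ} {i : Fin m} (hti : t ≤ k i) :
    BddAbove {N | ∃ P, IsGenPacking t lam v k P ∧ Multiset.card P = N} :=
  ⟨_, by
    rintro N ⟨P, hP, rfl⟩
    simpa only [Multiset.card_map] using (hP.proj hti).card_le_of_ord hti⟩

lemma genPackingNumber_le_ord {m t lam : ℕ} {v k : Fin m → ℕ} {i : Fin m} (hti : t ≤ k i) :
    genPackingNumber (Fin m) t lam v k ≤ ordPackingNumber (v i) (k i) t lam := by
  refine csSup_le' ?_
  rintro N ⟨P, hP, rfl⟩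
  exact le_csSup (bddAbove_packing_ord hti) ⟨_, hP.proj hti, Multiset.card_map _ _⟩

/-- if `D_λ(𝐯,𝐤,t) = D_λ(vᵢ,kᵢ,t)` for some index `i` with `kᵢ ≥ t`, then
increasing the other entries of `𝐯` does not change the generalized packing number. -/
theorem stmt1 {m : ℕ} (t lam : ℕ) (ht : 0 < t) (hlam : 0 < lam)
    (v v' k : Fin m → ℕ) (hv : ∀ i, 0 < v i) (hk : ∀ i, 0 < k i) (hkv : ∀ i, k i ≤ v i)
    (i : Fin m) (hti : t ≤ k i)
    (heq : genPackingNumber (Fin m) t lam v k = ordPackingNumber (v i) (k i) t lam)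
    (hv'i : v' i = v i) (hv'j : ∀ j, j ≠ i → v j ≤ v' j) :
    genPackingNumber (Fin m) t lam v' k = ordPackingNumber (v i) (k i) t lam := by
  have hle : ∀ j, v j ≤ v' j := fun j => by
    by_cases h : j = i
    · subst h; exact hv'i.ge
    · exact hv'j j h
  apply le_antisymm
  · rw [← hv'i]
    exact genPackingNumber_le_ord hti
  · rw [← heq]
    refine csSup_le' ?_
    rintro N ⟨P, hP, rfl⟩
    exact le_csSup (bddAbove_packing hti)
      ⟨_, hP.embed fun j => Fin.castLEEmb (hle j), Multiset.card_map _ _⟩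
end

section
/- Let 𝐯 = (v₁,…,v_m) and 𝐤 = (k₁,…,k_m) be m-tuples of positive integers with kᵢ ≤ vᵢ for all i, and suppose t ≤ m. Then for every t-subset {i₁,…,i_t} of {1,…,m}, the generalized packing number satisfies D(𝐯,𝐤,t) ≤ ⌊(v_{i₁}/k_{i₁})·⌊(v_{i₂}/k_{i₂})·⌊⋯⌊v_{i_t}/k_{i_t}⌋⋯⌋⌋⌋ (the nested integer-floor product); in particular D(𝐯,𝐤,t) is at most the minimum of this quantity over all t-subsets of {1,…,m}. -/
/-!
The bound is the Johnson–Schönheim argument iterated along distinct coordinates. Fix a list of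
distinct coordinates `a :: L` and a family of blocks such that any choice of one point in each
listed coordinate lies in at most one block. For each point `y` of the coordinate set `X_a`, the
blocks through `y` form a family with the same property for `L`, so by induction there are at most
`F(L)` of them. Counting pairs (block, point of the block in `X_a`) in two ways gives
`k_a * |P| ≤ v_a * F(L)` (`sum_card_filter_mem`), and dividing by `k_a` yields the next nested floor
(`card_le_foldr`). The packing condition, applied to the admissible tuple that is `1` on the chosen
`t` coordinates and `0` elsewhere, supplies the required hypothesis.
-/

open Finset

/-- Double counting of pairs (block, point of the block in coordinate `a`). -/
lemma sum_card_filter_mem {m : ℕ} {v k : Fin m → ℕ} (a : Fin m)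
    (P : Multiset (∀ i : Fin m, Finset (Fin (v i)))) (hP : ∀ B ∈ P, (B a).card = k a) :
    ∑ y : Fin (v a), (P.filter (fun B => y ∈ B a)).card = k a * P.card := by
  induction P using Multiset.induction_on with
  | empty => simp
  | cons B P ih =>
    have hB : (B a).card = k a := hP B (Multiset.mem_cons_self B P)
    have hih := ih fun C hC => hP C (Multiset.mem_cons_of_mem hC)
    simp only [← Multiset.countP_eq_card_filter, Multiset.countP_cons, Multiset.card_cons] at hih ⊢
    rw [Finset.sum_add_distrib, hih]
    simp [hB, mul_add]

/-- The nested floor bound for a family of blocks in which any choice of points in the distinct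
coordinates `L` lies in at most one block. -/
lemma card_le_foldr {m : ℕ} {v k : Fin m → ℕ} (hv : ∀ i, 0 < v i) (hk : ∀ i, 0 < k i)
    (L : List (Fin m)) (hL : L.Nodup) (P : Multiset (∀ i : Fin m, Finset (Fin (v i))))
    (hP : ∀ B ∈ P, ∀ i, (B i).card = k i)
    (h : ∀ x : ∀ i, Fin (v i), (P.filter (fun B => ∀ i ∈ L, x i ∈ B i)).card ≤ 1) :
    P.card ≤ L.foldr (fun i acc => v i * acc / k i) 1 := by
  induction L generalizing P with
  | nil => simpa using h fun i => ⟨0, hv i⟩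
  | cons a L ih =>
    obtain ⟨haL, hL'⟩ := List.nodup_cons.mp hL
    rw [List.foldr_cons, Nat.le_div_iff_mul_le (hk a), mul_comm,
      ← sum_card_filter_mem a P fun B hB => hP B hB a]
    refine (Finset.sum_le_card_nsmul _ _ (L.foldr (fun i acc => v i * acc / k i) 1)
      fun y _ => ?_).trans (by simp)
    refine ih hL' _ (fun B hB => hP B (Multiset.mem_of_mem_filter hB)) fun x => ?_
    -- Since `a ∉ L`, prescribing the point `y` in coordinate `a` leaves `x` unchanged on `L`.
    refine le_of_eq_of_le ?_ (h (Function.update x a y))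
    rw [Multiset.filter_filter]
    congr 1
    refine Multiset.filter_congr fun B _ => ?_
    have hx : ∀ i ∈ L, Function.update x a y i = x i := fun i hi =>
      Function.update_of_ne (by rintro rfl; exact haL hi) _ _
    simp only [List.forall_mem_cons, Function.update_self]
    constructor
    · rintro ⟨h1, h2⟩
      exact ⟨h2, fun i hi => by rw [hx i hi]; exact h1 i hi⟩
    · rintro ⟨h1, h2⟩
      exact ⟨fun i hi => by rw [← hx i hi]; exact h2 i hi, h1⟩

/-- for every `t`-subset `{i₁,…,i_t}` of the index set (given by an injective
function `f : Fin t → Fin m`), the generalized packing number `D(𝐯,𝐤,t)` is bounded above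
by the nested floor product `⌊(v_{i₁}/k_{i₁})·⌊⋯⌊v_{i_t}/k_{i_t}⌋⋯⌋⌋`. -/
theorem stmt2 {m : ℕ} (t : ℕ) (v k : Fin m → ℕ)
    (hv : ∀ i, 0 < v i) (hk : ∀ i, 0 < k i) (hkv : ∀ i, k i ≤ v i) (htm : t ≤ m)
    (f : Fin t → Fin m) (hf : Function.Injective f) :
    genPackingNumber (Fin m) t 1 v k ≤
      (List.finRange t).foldr (fun j acc => v (f j) * acc / k (f j)) 1 := by
  refine csSup_le' ?_
  rintro _ ⟨P, ⟨hcard, hpack⟩, rfl⟩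
  have hnd : ((List.finRange t).map f).Nodup := (List.nodup_finRange t).map hf
  have key := card_le_foldr hv hk ((List.finRange t).map f) hnd P hcard ?_
  · rwa [List.foldr_map] at key
  intro x
  set L := (List.finRange t).map f with hLdef
  have hsum : ∑ i, (if i ∈ L then 1 else 0) = t := by
    have hfilter : (Finset.univ.filter (· ∈ L)) = L.toFinset := by ext; simp
    rw [Finset.sum_boole, hfilter, List.toFinset_card_of_nodup hnd]
    simp [hLdef]
  have hle := hpack (fun i => if i ∈ L then 1 else 0)
    (fun i => by have := hk i; split_ifs <;> omega) hsum
    (fun i => if i ∈ L then {x i} else ∅) (fun i => by split_ifs <;> simp)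
  -- The two filters carry different decidability instances for `∀ i`; `convert` identifies them.
  convert hle using 3 with B hB
  refine forall_congr' fun i => ?_
  by_cases hi : i ∈ L <;> simp [hi]
end

section
/- Let 𝐯 = (v₁,…,v_m) and 𝐤 = (k₁,…,k_m) be m-tuples of positive integers with kᵢ ≤ vᵢ for all i, and suppose there exists a t-(𝐯,𝐤,λ) generalized packing with N blocks. Then for all indices i < j in {1,…,m}, there exists a t-(𝐯⁺,𝐤⁺,λ) generalized packing with N blocks, where 𝐯⁺ is the (m−1)-tuple obtained from 𝐯 by deleting the entries vᵢ and v_j and appending the entry vᵢ+v_j, and 𝐤⁺ is obtained from 𝐤 in the same way. In particular, D_λ(𝐯⁺,𝐤⁺,t) ≥ D_λ(𝐯,𝐤,t). -/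
/-!
Merging parts is an instance of the following. Let `π : ι → κ` be a map of index sets, and let
`w c`, `l c` be the sums of `v`, `k` over the fibre `π ⁻¹ c`. Identify the disjoint union of the
parts `Fin (v a)` with the disjoint union of the parts `Fin (w c)` by an equivalence `F` lying
over `π` (`exists_sigma_equiv`). A tuple of finsets is the same thing as a finset of the disjoint
union, so `F` carries blocks for `(v, k)` to blocks for `(w, l)` and preserves containment of
tuples. A tuple `T` over `κ` of total size `t` that lies in a transported block pulls back to a
tuple over `ι` of total size `t` lying in the original block, which makes the pulled-back tuple
admissible; so the bound for the original packing applies, and a tuple lying in no block needs no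
bound (`IsGenPacking.exists_coarsen`).

For the packing numbers, the set of sizes of packings is bounded when `t ≤ ∑ k`
(`IsGenPacking.bddAbove`), so the supremum is monotone. When `∑ k < t` there is no admissible
tuple, so arbitrarily large packings exist, and `genPackingNumber`, here the supremum of an
unbounded set of naturals, is `0` before merging (`genPackingNumber_eq_zero`).
-/

open Finset

/-- The vector obtained from `v` by merging parts `i` and `j` (deleting part `j` and
replacing the entry at `i` by `v i + v j`). -/
def mergeVec {m : ℕ} (v : Fin m → ℕ) (i j : Fin m) : {a : Fin m // a ≠ j} → ℕ :=
  fun a => if (a : Fin m) = i then v i + v j else v a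

/-- An equivalence between disjoint unions of parts which lies over `π`. -/
lemma exists_sigma_equiv {ι κ : Type} [Fintype ι] [DecidableEq κ]
    (π : ι → κ) (v : ι → ℕ) (w : κ → ℕ) (hw : ∀ c, w c = ∑ a with π a = c, v a) :
    ∃ F : (Σ a, Fin (v a)) ≃ (Σ c, Fin (w c)), ∀ x, (F x).1 = π x.1 := by
  have h : ∀ c, Nonempty ({x : Σ a, Fin (v a) // π x.1 = c} ≃ Fin (w c)) := by
    intro c
    refine ⟨Fintype.equivFinOfCardEq ?_⟩
    rw [Fintype.card_subtype, hw]
    have : (univ.filter fun x : Σ a, Fin (v a) => π x.1 = c)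
        = (univ.filter fun a => π a = c).sigma (fun a => (univ : Finset (Fin (v a)))) := by
      ext x; simp
    rw [this, card_sigma]
    simp
  let e := fun c => (h c).some
  exact ⟨(Equiv.sigmaFiberEquiv (fun x : Σ a, Fin (v a) => π x.1)).symm.trans
    (Equiv.sigmaCongrRight e), fun x => rfl⟩

/-- The image of a tuple `B` of finsets under an equivalence of disjoint unions. -/
def transport {ι κ : Type} {v : ι → ℕ} {w : κ → ℕ}
    (F : (Σ a, Fin (v a)) ≃ (Σ c, Fin (w c))) (B : ∀ a, Finset (Fin (v a))) :
    ∀ c, Finset (Fin (w c)) :=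
  fun c => univ.filter fun x => (F.symm ⟨c, x⟩).2 ∈ B (F.symm ⟨c, x⟩).1

lemma mem_transport {ι κ : Type} {v : ι → ℕ} {w : κ → ℕ}
    (F : (Σ a, Fin (v a)) ≃ (Σ c, Fin (w c))) (B : ∀ a, Finset (Fin (v a))) (y : Σ c, Fin (w c)) :
    y.2 ∈ transport F B y.1 ↔ (F.symm y).2 ∈ B (F.symm y).1 := by
  simp [transport]

lemma card_transport {ι κ : Type} [Fintype ι] [DecidableEq κ] {v : ι → ℕ}
    {w : κ → ℕ} (π : ι → κ) (F : (Σ a, Fin (v a)) ≃ (Σ c, Fin (w c)))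
    (hF : ∀ x, (F x).1 = π x.1) (B : ∀ a, Finset (Fin (v a))) (c : κ) :
    (transport F B c).card = ∑ a with π a = c, (B a).card := by
  rw [← card_sigma]
  refine card_bij (fun x _ => F.symm ⟨c, x⟩) ?_ ?_ ?_
  · intro x hx
    have h := hF (F.symm ⟨c, x⟩)
    rw [Equiv.apply_symm_apply] at h
    rw [mem_sigma, mem_filter]
    exact ⟨⟨mem_univ _, h.symm⟩, (mem_transport F B ⟨c, x⟩).1 hx⟩
  · intro x _ y _ h
    simpa using h
  · intro y hy
    rw [mem_sigma, mem_filter] at hy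
    obtain ⟨⟨-, h1⟩, h2⟩ := hy
    have h3 := hF y
    rw [h1] at h3
    have h4 : (F y).2 ∈ transport F B (F y).1 := by
      rw [mem_transport, Equiv.symm_apply_apply]; exact h2
    obtain ⟨d, z, hz⟩ : ∃ d z, F y = ⟨d, z⟩ := ⟨_, _, rfl⟩
    rw [hz] at h3 h4
    subst h3
    exact ⟨z, h4, by rw [← hz, Equiv.symm_apply_apply]⟩

lemma sum_card_transport {ι κ : Type} [Fintype ι] [Fintype κ] {v : ι → ℕ}
    {w : κ → ℕ} (F : (Σ a, Fin (v a)) ≃ (Σ c, Fin (w c))) (B : ∀ a, Finset (Fin (v a))) :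
    ∑ c, (transport F B c).card = ∑ a, (B a).card := by
  rw [← card_sigma, ← card_sigma]
  refine card_equiv F.symm fun y => ?_
  simp [mem_transport]

lemma subset_transport_iff {ι κ : Type} {v : ι → ℕ} {w : κ → ℕ}
    (F : (Σ a, Fin (v a)) ≃ (Σ c, Fin (w c))) (B : ∀ a, Finset (Fin (v a)))
    (T : ∀ c, Finset (Fin (w c))) :
    (∀ c, T c ⊆ transport F B c) ↔ ∀ a, transport F.symm T a ⊆ B a := by
  constructor
  · intro h a x hx
    have h1 := h _ ((mem_transport F.symm T ⟨a, x⟩).1 hx)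
    rwa [mem_transport, Equiv.symm_symm, Equiv.symm_apply_apply] at h1
  · intro h c x hx
    refine (mem_transport F B ⟨c, x⟩).2 (h _ ?_)
    rw [mem_transport, Equiv.symm_symm, Equiv.apply_symm_apply]
    exact hx

/-- Coarsening the index set along `π`, adding up `v` and `k` over fibres, keeps a packing a
packing with the same number of blocks. -/
lemma IsGenPacking.exists_coarsen {ι κ : Type} [Fintype ι] [DecidableEq ι] [Fintype κ]
    [DecidableEq κ] {t lam : ℕ} {v k : ι → ℕ} {w l : κ → ℕ} (π : ι → κ)
    (hw : ∀ c, w c = ∑ a with π a = c, v a) (hl : ∀ c, l c = ∑ a with π a = c, k a)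
    {P : Multiset (∀ a, Finset (Fin (v a)))} (hP : IsGenPacking t lam v k P) :
    ∃ P' : Multiset (∀ c, Finset (Fin (w c))),
      IsGenPacking t lam w l P' ∧ Multiset.card P' = Multiset.card P := by
  obtain ⟨F, hF⟩ := exists_sigma_equiv π v w hw
  refine ⟨P.map (transport F), ⟨?_, ?_⟩, Multiset.card_map _ _⟩
  · intro B' hB' c
    obtain ⟨B, hB, rfl⟩ := Multiset.mem_map.1 hB'
    rw [card_transport π F hF, hl]
    exact sum_congr rfl fun a _ => hP.1 B hB a
  · intro t' _ hsum T hT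
    rw [Multiset.filter_map, Multiset.card_map]
    simp only [Function.comp_def, subset_transport_iff]
    by_cases hne : ∃ B ∈ P, ∀ a, transport F.symm T a ⊆ B a
    · obtain ⟨B, hB, hTB⟩ := hne
      refine hP.2 (fun a => (transport F.symm T a).card) (fun a => ?_) ?_ _ fun _ => rfl
      · rw [← hP.1 B hB a]
        exact card_le_card (hTB a)
      · rw [sum_card_transport, ← hsum]
        exact sum_congr rfl fun c _ => hT c
    · have : P.filter (fun B => ∀ a, transport F.symm T a ⊆ B a) = 0 :=
        Multiset.filter_eq_nil.2 fun B hB h => hne ⟨B, hB, h⟩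
      rw [this]
      simp

/-- If `t ≤ ∑ k`, some admissible tuple `t'` exists. Every block contains a tuple of sets of
sizes `t'`, and each of the finitely many tuples lies in at most `lam` blocks. -/
lemma IsGenPacking.bddAbove {ι : Type} [Fintype ι] [DecidableEq ι] {t lam : ℕ} {v k : ι → ℕ}
    (ht : t ≤ ∑ a, k a) :
    BddAbove {N | ∃ P, IsGenPacking t lam v k P ∧ Multiset.card P = N} := by
  obtain ⟨t', ht', hsum⟩ : ∃ t' : ι → ℕ, (∀ a, t' a ≤ k a) ∧ ∑ a, t' a = t := by
    -- a `t`-element subset of the disjoint union of the `Fin (k a)` has suitable fibre sizes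
    obtain ⟨S, -, hS⟩ := exists_subset_card_eq (s := (univ : Finset (Σ a, Fin (k a)))) (n := t)
      (by simpa using ht)
    refine ⟨fun a => (S.filter fun x => x.1 = a).card, fun a => ?_, ?_⟩
    · calc (S.filter fun x => x.1 = a).card
          ≤ (({a} : Finset ι).sigma fun a => (univ : Finset (Fin (k a)))).card :=
            card_le_card fun x hx => by simpa using (mem_filter.1 hx).2
        _ = k a := by simp
    · rw [← hS]
      exact (card_eq_sum_card_fiberwise fun x _ => mem_univ _).symm
  let 𝒯 : Finset (∀ a, Finset (Fin (v a))) := univ.filter fun T => ∀ a, (T a).card = t' a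
  refine ⟨𝒯.card * lam, ?_⟩
  rintro N ⟨P, hP, rfl⟩
  have key : ∀ Q : Multiset (∀ a, Finset (Fin (v a))), (∀ B ∈ Q, ∀ a, (B a).card = k a) →
      Multiset.card Q ≤ ∑ T ∈ 𝒯, (Q.filter fun B => ∀ a, T a ⊆ B a).card := by
    intro Q
    induction Q using Multiset.induction_on with
    | empty => simp
    | cons B Q ih =>
      intro hQ
      have hB : ∃ T ∈ 𝒯, ∀ a, T a ⊆ B a := by
        have h : ∀ a, ∃ T ⊆ B a, T.card = t' a := fun a =>
          exists_subset_card_eq ((ht' a).trans (hQ B (Multiset.mem_cons_self _ _) a).ge)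
        choose T hT1 hT2 using h
        exact ⟨T, by simpa [𝒯] using hT2, hT1⟩
      obtain ⟨T, hT, hTB⟩ := hB
      rw [Multiset.card_cons]
      refine Nat.succ_le_of_lt ((ih fun B' hB' => hQ B' (Multiset.mem_cons_of_mem hB')).trans_lt ?_)
      refine sum_lt_sum (fun U _ => ?_) ⟨T, hT, ?_⟩
      · exact Multiset.card_le_card (Multiset.filter_le_filter _ (Multiset.le_cons_self _ _))
      · rw [Multiset.filter_cons_of_pos _ hTB, Multiset.card_cons]
        exact Nat.lt_succ_self _
  calc Multiset.card P ≤ ∑ T ∈ 𝒯, (P.filter fun B => ∀ a, T a ⊆ B a).card := key P hP.1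
    _ ≤ ∑ _T ∈ 𝒯, lam := sum_le_sum fun T hT => hP.2 t' ht' hsum T (mem_filter.1 hT).2
    _ = 𝒯.card * lam := by simp

/-- If `∑ k < t`, no tuple is admissible, so arbitrarily many copies of one block form a packing
and the packing number takes the default value of an unbounded supremum. -/
lemma genPackingNumber_eq_zero {ι : Type} [Fintype ι] [DecidableEq ι] {t lam : ℕ} {v k : ι → ℕ}
    (hkv : ∀ a, k a ≤ v a) (ht : ∑ a, k a < t) : genPackingNumber ι t lam v k = 0 := by
  refine Nat.sSup_of_not_bddAbove ?_
  rintro ⟨M, hM⟩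
  have h : ∀ a, ∃ B : Finset (Fin (v a)), B.card = k a := fun a => by
    obtain ⟨B, -, hB⟩ := exists_subset_card_eq (s := (univ : Finset (Fin (v a)))) (n := k a)
      (by simpa using hkv a)
    exact ⟨B, hB⟩
  choose B hB using h
  have : M + 1 ≤ M := hM ⟨Multiset.replicate (M + 1) B, ⟨fun B' hB' a => ?_, ?_⟩, by simp⟩
  · omega
  · rw [Multiset.eq_of_mem_replicate hB', hB]
  · intro t' ht' hsum
    have := sum_le_sum fun a (_ : a ∈ univ) => ht' a
    omega

/-- The map of index sets that sends `j` to `i` and fixes everything else. -/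
def mergeIndex {m : ℕ} (i j : Fin m) (hij : i ≠ j) (a : Fin m) : {a : Fin m // a ≠ j} :=
  if h : a = j then ⟨i, hij⟩ else ⟨a, h⟩

lemma mergeVec_eq_sum {m : ℕ} (v : Fin m → ℕ) (i j : Fin m) (hij : i ≠ j)
    (c : {a : Fin m // a ≠ j}) :
    mergeVec v i j c = ∑ a with mergeIndex i j hij a = c, v a := by
  obtain ⟨c, hc⟩ := c
  by_cases hci : c = i
  · subst hci
    have : (univ.filter fun a => mergeIndex c j hij a = ⟨c, hc⟩) = {c, j} := by
      ext a
      by_cases h : a = j <;> simp [mergeIndex, h]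
    rw [this, sum_pair hij]
    simp [mergeVec]
  · have : (univ.filter fun a => mergeIndex i j hij a = ⟨c, hc⟩) = {c} := by
      ext a
      by_cases h : a = j
      · simp [mergeIndex, h, Ne.symm hc, Ne.symm hci]
      · simp [mergeIndex, h]
    rw [this]
    simp [mergeVec, hci]

/-- merging two parts of a generalized packing yields a generalized packing
with the same number of blocks; in particular `D_λ(𝐯⁺,𝐤⁺,t) ≥ D_λ(𝐯,𝐤,t)`. -/
theorem stmt3 {m : ℕ} (t lam N : ℕ) (ht : 0 < t) (hlam : 0 < lam)
    (v k : Fin m → ℕ) (hv : ∀ i, 0 < v i) (hk : ∀ i, 0 < k i) (hkv : ∀ i, k i ≤ v i)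
    (i j : Fin m) (hij : i < j)
    (P : Multiset (∀ a : Fin m, Finset (Fin (v a))))
    (hP : IsGenPacking t lam v k P) (hN : Multiset.card P = N) :
    (∃ P' : Multiset (∀ a : {a : Fin m // a ≠ j}, Finset (Fin (mergeVec v i j a))),
        IsGenPacking t lam (mergeVec v i j) (mergeVec k i j) P' ∧ Multiset.card P' = N) ∧
    genPackingNumber (Fin m) t lam v k ≤
      genPackingNumber {a : Fin m // a ≠ j} t lam (mergeVec v i j) (mergeVec k i j) := by
  have hne : i ≠ j := hij.ne
  have hmerge : ∀ Q : Multiset (∀ a : Fin m, Finset (Fin (v a))), IsGenPacking t lam v k Q →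
      ∃ P' : Multiset (∀ a : {a : Fin m // a ≠ j}, Finset (Fin (mergeVec v i j a))),
        IsGenPacking t lam (mergeVec v i j) (mergeVec k i j) P' ∧
          Multiset.card P' = Multiset.card Q := fun Q hQ =>
    hQ.exists_coarsen (mergeIndex i j hne) (mergeVec_eq_sum v i j hne) (mergeVec_eq_sum k i j hne)
  refine ⟨hN ▸ hmerge P hP, ?_⟩
  rcases lt_or_ge (∑ a, k a) t with h | h
  · rw [genPackingNumber_eq_zero hkv h]
    exact Nat.zero_le _
  · have hsum : ∑ c, mergeVec k i j c = ∑ a, k a := by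
      simp only [mergeVec_eq_sum k i j hne]
      exact sum_fiberwise _ _ _
    refine csSup_le_csSup (IsGenPacking.bddAbove (hsum ▸ h)) ⟨_, P, hP, rfl⟩ ?_
    rintro _ ⟨Q, hQ, rfl⟩
    exact hmerge Q hQ
end

section
/- Let k ≥ 3 and let 𝐯 = (v₁,…,v_k) with v₁ ≤ v₂ ≤ ⋯ ≤ v_k, and let 𝐤 = (1,1,…,1) of length k. If there exist k−2 mutually orthogonal v₁ × v₂ Latin rectangles, then D(𝐯,𝐤,2) = v₁·v₂. -/
/-!
Blocks with `𝐤 = (1,…,1)` are tuples picking one point from each `X i`, and a packing with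
`t = 2`, `λ = 1` is a family of such tuples in which any two coordinates determine the tuple.

Upper bound (`card_le_mul_of_isGenPacking`): projecting blocks to two fixed coordinates is
injective, so there are at most `v i * v j` blocks; the first two coordinates give `v₁ * v₂`.

Lower bound (`isGenPacking_of_pairwise_determined`): to each cell `(x, y)` of the rectangles
associate the tuple `(x, y, L₁ x y, …, L_{k-2} x y)`, where symbols in `Fin v₂` are viewed in
`Fin vₗ` since `v₂ ≤ vₗ`. Any two coordinates determine the cell, by the row and column conditions
when one of the coordinates is `x` or `y`, and by orthogonality otherwise.
-/

open Finset

/-- An `r × c` Latin rectangle on `c` symbols: each symbol occurs exactly once in each row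
(rows are bijections since `Fin c` is finite) and at most once in each column. -/
def IsLatinRectangle {r c : ℕ} (L : Fin r → Fin c → Fin c) : Prop :=
  (∀ i, Function.Injective (L i)) ∧ (∀ j, Function.Injective fun i => L i j)

/-- Orthogonality of two Latin rectangles: the pairs `(L i j, M i j)` are all distinct. -/
def OrthogonalLR {r c : ℕ} (L M : Fin r → Fin c → Fin c) : Prop :=
  ∀ i j i' j', L i j = L i' j' → M i j = M i' j' → i = i' ∧ j = j'

/-- The projection of a packing to coordinates `i ≠ j` has no repetitions, because a pair of points
in these coordinates is contained in at most one block. -/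
theorem card_le_mul_of_isGenPacking {ι : Type} [Fintype ι] [DecidableEq ι] {v : ι → ℕ}
    {P : Multiset (∀ i : ι, Finset (Fin (v i)))} (hP : IsGenPacking 2 1 v (fun _ => 1) P)
    {i j : ι} (hij : i ≠ j) : Multiset.card P ≤ v i * v j := by
  classical
  obtain ⟨hcard, hpack⟩ := hP
  let f : (∀ i : ι, Finset (Fin (v i))) → Finset (Fin (v i)) × Finset (Fin (v j)) :=
    fun B => (B i, B j)
  have hnodup : (P.map f).Nodup := by
    rw [Multiset.nodup_iff_count_le_one]
    intro a
    by_cases ha : a ∈ P.map f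
    · obtain ⟨B₀, hB₀, rfl⟩ := Multiset.mem_map.1 ha
      rw [Multiset.count_map]
      refine le_trans (Multiset.card_le_card ?_)
        (hpack (fun l => if l = i ∨ l = j then 1 else 0) (fun l => by dsimp only; split_ifs <;> simp)
          ?_ (fun l => if l = i ∨ l = j then B₀ l else ∅) ?_)
      · refine Multiset.monotone_filter_right P ?_
        intro B hB l
        simp only [f, Prod.mk.injEq] at hB
        split_ifs with hl
        · rcases hl with rfl | rfl
          · exact hB.1.le
          · exact hB.2.le
        · simp
      · rw [Finset.sum_boole]
        have : (Finset.univ.filter fun l => l = i ∨ l = j) = {i, j} := by ext l; simp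
        rw [this, Finset.card_pair hij]; rfl
      · intro l
        split_ifs
        · exact hcard B₀ hB₀ l
        · simp
    · rw [Multiset.count_eq_zero_of_notMem ha]; exact Nat.zero_le _
  have hsub : (P.map f).toFinset ⊆
      Finset.powersetCard 1 Finset.univ ×ˢ Finset.powersetCard 1 Finset.univ := by
    intro a ha
    obtain ⟨B, hB, rfl⟩ := Multiset.mem_map.1 (Multiset.mem_toFinset.1 ha)
    simp [f, Finset.mem_product, Finset.mem_powersetCard, hcard B hB]
  have h := Finset.card_le_card hsub
  rw [Multiset.toFinset_card_of_nodup hnodup] at h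
  simpa using h

/-- Tuples of points, any two coordinates of which determine the index, form a packing. -/
theorem isGenPacking_of_pairwise_determined {ι X : Type} [Fintype ι] [DecidableEq ι] [Fintype X]
    {v : ι → ℕ} (c : X → ∀ l, Fin (v l))
    (hc : ∀ l m, l ≠ m → ∀ x y, c x l = c y l → c x m = c y m → x = y) :
    IsGenPacking 2 1 v (fun _ => 1)
      ((Finset.univ : Finset X).val.map fun x l => ({c x l} : Finset (Fin (v l)))) := by
  classical
  refine ⟨?_, ?_⟩
  · intro B hB l
    obtain ⟨x, -, rfl⟩ := Multiset.mem_map.1 hB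
    simp
  · intro t' ht' hsum T hT
    -- A 0-1 vector of sum 2 is supported on two distinct coordinates.
    obtain ⟨l, m, hlm, hl, hm⟩ : ∃ l m, l ≠ m ∧ t' l = 1 ∧ t' m = 1 := by
      have h1 : ∑ l, t' l = (Finset.univ.filter fun l => t' l = 1).card := by
        rw [Finset.card_filter]
        refine Finset.sum_congr rfl fun l _ => ?_
        have : t' l ≤ 1 := ht' l
        split_ifs <;> omega
      have h2 : 1 < (Finset.univ.filter fun l => t' l = 1).card := by omega
      obtain ⟨l, hl, m, hm, hlm⟩ := Finset.one_lt_card.1 h2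
      exact ⟨l, m, hlm, (Finset.mem_filter.1 hl).2, (Finset.mem_filter.1 hm).2⟩
    obtain ⟨p, hp⟩ := Finset.card_eq_one.1 ((hT l).trans hl)
    obtain ⟨q, hq⟩ := Finset.card_eq_one.1 ((hT m).trans hm)
    rw [Multiset.filter_map, Multiset.card_map]
    change (Finset.univ.filter fun x => ∀ i, T i ⊆ {c x i}).card ≤ 1
    rw [Finset.card_le_one]
    intro x hx y hy
    have hx' := (Finset.mem_filter.1 hx).2
    have hy' := (Finset.mem_filter.1 hy).2
    have hxl := hx' l
    have hxm := hx' m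
    have hyl := hy' l
    have hym := hy' m
    rw [hp, Finset.singleton_subset_singleton] at hxl hyl
    rw [hq, Finset.singleton_subset_singleton] at hxm hym
    exact hc l m hlm x y (hxl.symm.trans hyl) (hxm.symm.trans hym)

/-- if there exist `k−2` mutually orthogonal `v₁ × v₂` Latin rectangles,
then `D(𝐯,(1,…,1),2) = v₁·v₂`. -/
theorem stmt4 (k : ℕ) (hk : 3 ≤ k) (v : Fin k → ℕ) (hv : ∀ i, 0 < v i) (hmono : Monotone v)
    (L : Fin (k - 2) → Fin (v ⟨0, by omega⟩) → Fin (v ⟨1, by omega⟩) → Fin (v ⟨1, by omega⟩))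
    (hL : ∀ a, IsLatinRectangle (L a))
    (horth : ∀ a b, a ≠ b → OrthogonalLR (L a) (L b)) :
    genPackingNumber (Fin k) 2 1 v (fun _ => 1) = v ⟨0, by omega⟩ * v ⟨1, by omega⟩ := by
  refine IsGreatest.csSup_eq ⟨?_, ?_⟩
  · -- Coordinates are built as natural numbers first, so that the case distinction on `l`
    -- takes place in a fixed type.
    let d : Fin (v ⟨0, by omega⟩) × Fin (v ⟨1, by omega⟩) → Fin k → ℕ := fun z l =>
      if l.val = 0 then z.1.val else if l.val = 1 then z.2.val
        else (L ⟨l.val - 2, by omega⟩ z.1 z.2).val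
    have hd : ∀ z l, d z l < v l := by
      intro z l
      dsimp only [d]
      split_ifs with h0 h1
      · exact lt_of_lt_of_le z.1.isLt (hmono (Fin.le_def.2 (Nat.zero_le _)))
      · exact lt_of_lt_of_le z.2.isLt (hmono (Fin.le_def.2 h1.ge))
      · exact lt_of_lt_of_le (Fin.isLt _)
          (hmono (Fin.le_def.2 (show 1 ≤ l.val by omega)))
    have key : ∀ l m : Fin k, l < m → ∀ z w, d z l = d w l → d z m = d w m → z = w := by
      rintro l m hlm ⟨x, y⟩ ⟨x', y'⟩ h1 h2
      have hlm' : l.val < m.val := hlm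
      have hm0 : m.val ≠ 0 := by omega
      dsimp only [d] at h1 h2
      rw [if_neg hm0, if_neg hm0] at h2
      by_cases hl0 : l.val = 0
      · rw [if_pos hl0, if_pos hl0] at h1
        obtain rfl := Fin.ext h1
        split_ifs at h2 with hm1
        · obtain rfl := Fin.ext h2
          rfl
        · obtain rfl := (hL _).1 x (Fin.ext h2)
          rfl
      · have hm1 : m.val ≠ 1 := by omega
        rw [if_neg hl0, if_neg hl0] at h1
        rw [if_neg hm1, if_neg hm1] at h2
        split_ifs at h1 with hl1
        · obtain rfl := Fin.ext h1
          obtain rfl := (hL _).2 y (Fin.ext h2)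
          rfl
        · obtain ⟨rfl, rfl⟩ := horth ⟨l.val - 2, by omega⟩ ⟨m.val - 2, by omega⟩
            (by simp only [ne_eq, Fin.mk.injEq]; omega)
            x y x' y' (Fin.ext h1) (Fin.ext h2)
          rfl
    refine ⟨_, isGenPacking_of_pairwise_determined (fun z l => ⟨d z l, hd z l⟩) ?_, ?_⟩
    · intro l m hlm z w h1 h2
      have h1' := Fin.mk.inj h1
      have h2' := Fin.mk.inj h2
      rcases lt_or_gt_of_ne hlm with h | h
      · exact key l m h z w h1' h2'
      · exact key m l h z w h2' h1'
    · simp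
  · rintro N ⟨P, hP, rfl⟩
    exact card_le_mul_of_isGenPacking hP (by simp)
end

section
/- Let v₁ ≥ 2 and v₂ ≥ 1, and let 𝐯 = (v₁,v₂), 𝐤 = (2,1). Then D(𝐯,𝐤,2) = min{ C(v₁,2), v₂·⌊v₁/2⌋ }, where C(v₁,2) = v₁(v₁−1)/2 is the binomial coefficient. -/
/-!
A packing for `𝐤 = (2,1)`, `t = 2`, `λ = 1` is a set of edges of the complete graph on `v₁`
vertices, properly coloured with `v₂` colours: the admissible type `(2,0)` says that no edge is
repeated, and the type `(1,1)` says that edges of one colour are disjoint.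

*Upper bound.* There are at most `C(v₁,2)` edges, and each of the `v₂` colour classes is a matching,
hence has at most `⌊v₁/2⌋` edges (`card_le_of_packing`).

*Lower bound.* Let `N` be the odd number among `v₁ - 1`, `v₁`. The complete graph has a proper edge
colouring with `N` colours (`edgeColour`): identify the vertices below `N` with `ℤ/N`, colour
`{a, b}` by `a + b`, and, when there is a further vertex `N = ∞`, colour `{a, ∞}` by `2a`. Since
`C(v₁,2) = N⌊v₁/2⌋` and every class has at most `⌊v₁/2⌋` edges, discarding the classes of the
colours `≥ v₂` leaves at least `min{C(v₁,2), v₂⌊v₁/2⌋}` edges (`min_le_card_colour_lt`), and these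
form a packing.
-/

open Finset

/-- A matching on `n` vertices has at most `⌊n/2⌋` edges. -/
theorem card_matching_le {n : ℕ} (M : Finset (Finset (Fin n))) (h2 : ∀ e ∈ M, e.card = 2)
    (hd : ∀ e ∈ M, ∀ f ∈ M, ∀ x, x ∈ e → x ∈ f → e = f) : M.card ≤ n / 2 := by
  have hdis : (M : Set (Finset (Fin n))).PairwiseDisjoint id := by
    intro e he f hf hne
    refine Finset.disjoint_left.2 fun x hx hx' => hne (hd e he f hf x hx hx')
  have h := Finset.card_biUnion hdis
  simp only [id] at h
  rw [Finset.sum_congr rfl h2] at h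
  have h' := Finset.card_le_univ (M.biUnion id)
  simp at h h'
  omega

/-- The colour of an edge `e` in the round-robin colouring with `N` colours. The vertex `N`, if
present, plays the role of `∞`; as `N ≡ 0 (mod N)`, doubling the sum of `{a, ∞}` gives `2a`. -/
def edgeColour (n N : ℕ) (e : Finset (Fin n)) : ℕ :=
  ((if ∃ x ∈ e, x.val = N then 2 else 1) * ∑ x ∈ e, x.val) % N

theorem edgeColour_pair {n N : ℕ} {x y : Fin n} (h : x ≠ y) :
    edgeColour n N {x, y} =
      ((if x.val = N ∨ y.val = N then 2 else 1) * (x.val + y.val)) % N := by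
  simp [edgeColour, Finset.sum_pair h]

theorem edgeColour_proper_aux {n N : ℕ} (hodd : N % 2 = 1) (hn : n ≤ N + 1) {x y z : Fin n}
    (hxy : x ≠ y) (hxz : x ≠ z)
    (h : edgeColour n N {x, y} = edgeColour n N {x, z}) : y = z := by
  rw [edgeColour_pair hxy, edgeColour_pair hxz] at h
  have hx := x.isLt
  have hy := y.isLt
  have hz := z.isLt
  rw [Ne, Fin.ext_iff] at hxy hxz
  apply Fin.ext
  generalize x.val = a at *
  generalize y.val = b at *
  generalize z.val = c at *
  change _ ≡ _ [MOD N] at h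
  by_cases ha : a = N
  · subst ha
    simp only [true_or, if_true] at h
    have h' := Nat.ModEq.cancel_left_of_coprime
      (Nat.coprime_two_right.2 (Nat.odd_iff.2 hodd)) h
    exact Nat.ModEq.eq_of_lt_of_lt (Nat.ModEq.add_left_cancel' _ h') (by omega) (by omega)
  · by_cases hb : b = N <;> by_cases hc : c = N
    · omega
    · subst hb
      simp only [or_true, if_true, ha, hc, or_self, if_false, one_mul, two_mul] at h
      have h1 : a + a ≡ a + b + (a + b) [MOD b] := by simp [Nat.ModEq, ← add_assoc, add_right_comm]
      have := Nat.ModEq.eq_of_lt_of_lt (Nat.ModEq.add_left_cancel' _ (h1.trans h)) (by omega) (by omega)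
      omega
    · subst hc
      simp only [or_true, if_true, ha, hb, or_self, if_false, one_mul, two_mul] at h
      have h1 : a + a ≡ a + c + (a + c) [MOD c] := by simp [Nat.ModEq, ← add_assoc, add_right_comm]
      have := Nat.ModEq.eq_of_lt_of_lt (Nat.ModEq.add_left_cancel' _ (h1.trans h.symm)) (by omega) (by omega)
      omega
    · simp only [ha, hb, hc, or_self, if_false, one_mul] at h
      exact Nat.ModEq.eq_of_lt_of_lt (Nat.ModEq.add_left_cancel' _ h) (by omega) (by omega)

theorem exists_eq_pair {n : ℕ} {e : Finset (Fin n)} (he : e.card = 2) {x : Fin n} (hx : x ∈ e) :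
    ∃ y, x ≠ y ∧ e = {x, y} := by
  obtain ⟨a, b, hab, rfl⟩ := Finset.card_eq_two.1 he
  simp only [Finset.mem_insert, Finset.mem_singleton] at hx
  rcases hx with rfl | rfl
  · exact ⟨b, hab, rfl⟩
  · exact ⟨a, hab.symm, Finset.pair_comm _ _⟩

theorem edgeColour_proper {n N : ℕ} (hodd : N % 2 = 1) (hn : n ≤ N + 1) {e f : Finset (Fin n)}
    (he : e.card = 2) (hf : f.card = 2) {x : Fin n} (hxe : x ∈ e) (hxf : x ∈ f)
    (h : edgeColour n N e = edgeColour n N f) : e = f := by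
  obtain ⟨y, hy, rfl⟩ := exists_eq_pair he hxe
  obtain ⟨z, hz, rfl⟩ := exists_eq_pair hf hxf
  rw [edgeColour_proper_aux hodd hn hy hz h]

/-- The number of colours: the odd one of `n - 1` and `n`. -/
theorem exists_numColours (n : ℕ) (h : 2 ≤ n) :
    ∃ N, N % 2 = 1 ∧ n ≤ N + 1 ∧ n.choose 2 = N * (n / 2) := by
  rw [Nat.choose_two_right]
  rcases Nat.even_or_odd' n with ⟨k, rfl | rfl⟩
  · refine ⟨2 * k - 1, by omega, by omega, ?_⟩
    rw [mul_assoc, Nat.mul_div_cancel_left _ two_pos, Nat.mul_div_cancel_left _ two_pos, mul_comm]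
  · refine ⟨2 * k + 1, by omega, by omega, ?_⟩
    have h1 : 2 * k + 1 - 1 = 2 * k := by omega
    have h2 : (2 * k + 1) / 2 = k := by omega
    rw [h1, h2, mul_left_comm, Nat.mul_div_cancel_left _ two_pos]

/-- The edges whose colour is less than `w`. -/
def smallEdges (n N w : ℕ) : Finset (Finset (Fin n)) :=
  (powersetCard 2 univ).filter fun e => edgeColour n N e < w

theorem min_le_card_colour_lt {n N : ℕ} (hodd : N % 2 = 1) (hn : n ≤ N + 1)
    (hC : n.choose 2 = N * (n / 2)) (w : ℕ) :
    min (n.choose 2) (w * (n / 2)) ≤ (smallEdges n N w).card := by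
  have hsum := Finset.card_filter_add_card_filter_not (s := powersetCard 2 (univ : Finset (Fin n)))
    (fun e => edgeColour n N e < w)
  rw [card_powersetCard, card_univ, Fintype.card_fin] at hsum
  have hrest : ((powersetCard 2 (univ : Finset (Fin n))).filter
      fun e => ¬ edgeColour n N e < w).card ≤ (n / 2) * (Finset.Ico w N).card := by
    refine Finset.card_le_mul_card_image_of_maps_to (f := edgeColour n N) ?_ _ ?_
    · intro e he
      have := (Finset.mem_filter.1 he).2
      exact Finset.mem_coe.2 (Finset.mem_Ico.2 ⟨not_lt.1 this, Nat.mod_lt _ (by omega)⟩)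
    · intro j _
      refine card_matching_le _ ?_ ?_
      · intro e he
        simp only [mem_filter, mem_powersetCard] at he
        exact he.1.1.2
      · intro e he f hf x hx hx'
        simp only [mem_filter, mem_powersetCard] at he hf
        exact edgeColour_proper hodd hn he.1.1.2 hf.1.1.2 hx hx' (he.2.trans hf.2.symm)
  rw [Nat.card_Ico] at hrest
  rcases le_total w N with hw | hw
  · obtain ⟨d, rfl⟩ := Nat.exists_eq_add_of_le hw
    rw [Nat.add_sub_cancel_left] at hrest
    refine (min_le_right _ _).trans ?_
    rw [hC] at hsum
    unfold smallEdges
    nlinarith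
  · rw [Nat.sub_eq_zero_of_le hw] at hrest
    refine (min_le_left _ _).trans ?_
    unfold smallEdges
    omega

/-- The block with components `e` and `s`. -/
def mkBlock {v₁ v₂ : ℕ} (e : Finset (Fin v₁)) (s : Finset (Fin v₂)) :
    ∀ i : Fin 2, Finset (Fin (![v₁, v₂] i))
  | 0 => e
  | 1 => s

/-- The packing condition with the admissible tuple read off from `T`. -/
theorem card_filter_le_one {v₁ v₂ : ℕ} {P : Multiset (∀ i : Fin 2, Finset (Fin (![v₁, v₂] i)))}
    (hP : IsGenPacking 2 1 ![v₁, v₂] ![2, 1] P) (T : ∀ i : Fin 2, Finset (Fin (![v₁, v₂] i)))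
    (h0 : (T 0).card ≤ 2) (h1 : (T 1).card ≤ 1) (hs : (T 0).card + (T 1).card = 2) :
    (P.filter (fun B => ∀ i, T i ⊆ B i)).card ≤ 1 := by
  have hadm : ∀ i, (T i).card ≤ ![2, 1] i := by
    intro i
    fin_cases i
    · exact h0
    · exact h1
  have hsum : ∑ i, (T i).card = 2 := by
    rw [Fin.sum_univ_two]
    exact hs
  have h := hP.2 (fun i => (T i).card) hadm hsum T (fun _ => rfl)
  -- The two sides differ only in the decidability instance for `∀ i : Fin 2`.
  convert h

theorem card_le_of_packing {v₁ v₂ : ℕ} {P : Multiset (∀ i : Fin 2, Finset (Fin (![v₁, v₂] i)))}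
    (hP : IsGenPacking 2 1 ![v₁, v₂] ![2, 1] P) :
    P.card ≤ min (v₁.choose 2) (v₂ * (v₁ / 2)) := by
  have hc0 : ∀ B ∈ P, (B 0).card = 2 := fun B hB => hP.1 B hB 0
  have hc1 : ∀ B ∈ P, (B 1).card = 1 := fun B hB => hP.1 B hB 1
  -- Two copies of `B` would both contain the pair `B 0`.
  have hnd : P.Nodup := by
    refine Multiset.nodup_iff_count_le_one.2 fun B => ?_
    by_cases hB : B ∈ P
    · refine le_trans ?_ (card_filter_le_one hP (mkBlock (B 0) ∅) (hc0 B hB).le (by simp [mkBlock])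
        (congrArg (· + 0) (hc0 B hB)))
      rw [← Multiset.countP_eq_card_filter, Multiset.count]
      rw [Multiset.countP_eq_card_filter, Multiset.countP_eq_card_filter]
      refine Multiset.card_le_card (Multiset.monotone_filter_right _ ?_)
      rintro B' rfl i
      fin_cases i
      · exact Finset.Subset.refl _
      · exact Finset.empty_subset _
    · rw [Multiset.count_eq_zero_of_notMem hB]
      exact zero_le_one
  obtain ⟨S, rfl⟩ : ∃ S : Finset (∀ i : Fin 2, Finset (Fin (![v₁, v₂] i))), S.val = P :=
    ⟨⟨P, hnd⟩, rfl⟩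
  have huniq : ∀ T : ∀ i : Fin 2, Finset (Fin (![v₁, v₂] i)), (T 0).card ≤ 2 → (T 1).card ≤ 1 →
      (T 0).card + (T 1).card = 2 → ∀ B ∈ S, ∀ B' ∈ S, (∀ i, T i ⊆ B i) → (∀ i, T i ⊆ B' i) →
      B = B' := by
    intro T h0 h1 hs B hB B' hB' hTB hTB'
    have h := card_filter_le_one hP T h0 h1 hs
    have h' : (S.filter (fun B => ∀ i, T i ⊆ B i)).card ≤ 1 := by
      rw [← Finset.card_val, Finset.filter_val]
      exact h
    exact Finset.card_le_one.1 h' B (Finset.mem_filter.2 ⟨hB, hTB⟩) B'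
      (Finset.mem_filter.2 ⟨hB', hTB'⟩)
  have hinj : ∀ B ∈ S, ∀ B' ∈ S, B 0 = B' 0 → B = B' := by
    intro B hB B' hB' h
    refine huniq (mkBlock (B 0) ∅) (hc0 B hB).le (by simp [mkBlock])
        (congrArg (· + 0) (hc0 B hB)) B hB B' hB' ?_ ?_
    · intro i
      fin_cases i
      · exact Finset.Subset.refl _
      · exact Finset.empty_subset _
    · intro i
      fin_cases i
      · exact h.subset
      · exact Finset.empty_subset _
  have hS : Multiset.card S.val = S.card := rfl
  rw [hS]
  refine le_min ?_ ?_
  · have h := Finset.card_le_card_of_injOn (s := S) (t := powersetCard 2 (univ : Finset (Fin v₁)))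
      (fun B => B 0) (fun B hB => Finset.mem_coe.2
        (Finset.mem_powersetCard.2 ⟨Finset.subset_univ _, hc0 B hB⟩))
      (fun B hB B' hB' h => hinj B hB B' hB' h)
    rwa [card_powersetCard, card_univ, Fintype.card_fin] at h
  · -- Naming the second component as a map into `Finset (Fin v₂)` makes its equality decidable.
    obtain ⟨p, hp⟩ : ∃ p : (∀ i : Fin 2, Finset (Fin (![v₁, v₂] i))) → Finset (Fin v₂),
        ∀ B, p B = B 1 := ⟨fun B => B 1, fun _ => rfl⟩
    have h := Finset.card_le_mul_card_image_of_maps_to (s := S)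
      (t := powersetCard 1 (univ : Finset (Fin v₂)))
      (f := p) (fun B hB => Finset.mem_coe.2
        (Finset.mem_powersetCard.2 ⟨Finset.subset_univ _, hp B ▸ hc1 B hB⟩)) (v₁ / 2) ?_
    · rwa [card_powersetCard, card_univ, Fintype.card_fin, Nat.choose_one_right, mul_comm] at h
    · intro s hs
      have hcard := Finset.card_image_of_injOn (s := S.filter fun B => p B = s)
        (f := fun B => (B 0 : Finset (Fin v₁))) (fun B hB B' hB' h =>
          hinj B (Finset.mem_filter.1 hB).1 B' (Finset.mem_filter.1 hB').1 h)
      rw [← hcard]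
      refine card_matching_le _ ?_ ?_
      · intro e he
        obtain ⟨B, hB, rfl⟩ := Finset.mem_image.1 he
        exact hc0 B (Finset.mem_filter.1 hB).1
      · intro e he f hf x hx hx'
        obtain ⟨B, hB, rfl⟩ := Finset.mem_image.1 he
        obtain ⟨B', hB', rfl⟩ := Finset.mem_image.1 hf
        have hs1 := (Finset.mem_powersetCard.1 hs).2
        obtain ⟨hB, hBs⟩ := Finset.mem_filter.1 hB
        obtain ⟨hB', hBs'⟩ := Finset.mem_filter.1 hB'
        rw [huniq (mkBlock {x} s) ((Finset.card_singleton x).trans_le one_le_two) hs1.le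
          (congrArg₂ (· + ·) (Finset.card_singleton x) hs1) B hB B' hB' ?_ ?_]
        · intro i
          fin_cases i
          · exact Finset.singleton_subset_iff.2 hx
          · exact (hBs.symm.trans (hp B)).subset
        · intro i
          fin_cases i
          · exact Finset.singleton_subset_iff.2 hx'
          · exact (hBs'.symm.trans (hp B')).subset

/-- The block of an edge: the edge together with the singleton of its colour. The second component
is empty if the colour is not less than `v₂`. -/
def edgeBlock (v₁ v₂ N : ℕ) (e : Finset (Fin v₁)) : ∀ i : Fin 2, Finset (Fin (![v₁, v₂] i)) :=
  mkBlock e (univ.filter fun j : Fin v₂ => j.val = edgeColour v₁ N e)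

theorem edgeBlock_injective (v₁ v₂ N : ℕ) : Function.Injective (edgeBlock v₁ v₂ N) :=
  fun _ _ h => congrFun h 0

theorem isGenPacking_edgeBlocks {v₁ v₂ N : ℕ} (hodd : N % 2 = 1) (hn : v₁ ≤ N + 1) :
    IsGenPacking 2 1 ![v₁, v₂] ![2, 1]
      ((smallEdges v₁ N v₂).map ⟨edgeBlock v₁ v₂ N, edgeBlock_injective v₁ v₂ N⟩).val := by
  refine ⟨?_, ?_⟩
  · intro B hB i
    obtain ⟨e, he, rfl⟩ := Finset.mem_map.1 (Finset.mem_def.2 hB)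
    simp only [smallEdges, mem_filter, mem_powersetCard] at he
    fin_cases i
    · exact he.1.2
    · have h : (univ.filter fun j : Fin v₂ => j.val = edgeColour v₁ N e).card = 1 := by
        refine Finset.card_eq_one.2 ⟨⟨edgeColour v₁ N e, he.2⟩, ?_⟩
        ext j
        simp [Fin.ext_iff]
      exact h
  · intro t' ht' hsum T hT
    rw [Fin.sum_univ_two] at hsum
    have ht0 : t' 0 ≤ 2 := ht' 0
    have ht1 : t' 1 ≤ 1 := ht' 1
    rw [← Finset.filter_val, Finset.card_val]
    suffices h : (((smallEdges v₁ N v₂).map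
        ⟨edgeBlock v₁ v₂ N, edgeBlock_injective v₁ v₂ N⟩).filter
          fun B => ∀ i : Fin 2, T i ⊆ B i).card ≤ 1 by
      convert h
    refine Finset.card_le_one.2 ?_
    intro B hB B' hB'
    obtain ⟨hB, hTB⟩ := Finset.mem_filter.1 hB
    obtain ⟨hB', hTB'⟩ := Finset.mem_filter.1 hB'
    obtain ⟨e, he, rfl⟩ := Finset.mem_map.1 hB
    obtain ⟨f, hf, rfl⟩ := Finset.mem_map.1 hB'
    simp only [smallEdges, mem_filter, mem_powersetCard] at he hf
    have hTe : T 0 ⊆ e := hTB 0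
    have hTf : T 0 ⊆ f := hTB' 0
    have hTe1 : T 1 ⊆ univ.filter fun j : Fin v₂ => j.val = edgeColour v₁ N e := hTB 1
    have hTf1 : T 1 ⊆ univ.filter fun j : Fin v₂ => j.val = edgeColour v₁ N f := hTB' 1
    suffices h : e = f by rw [h]
    rcases Nat.eq_zero_or_pos (t' 1) with h0 | h0
    · have hT0 : (T 0).card = 2 := by rw [hT 0]; omega
      exact (Finset.eq_of_subset_of_card_le hTe (he.1.2.trans hT0.symm).le).symm.trans
        (Finset.eq_of_subset_of_card_le hTf (hf.1.2.trans hT0.symm).le)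
    · have hT0 : 0 < (T 0).card := by rw [hT 0]; omega
      have hT1 : 0 < (T 1).card := by rw [hT 1]; omega
      obtain ⟨x, hx⟩ := Finset.card_pos.1 hT0
      obtain ⟨j, hj⟩ := Finset.card_pos.1 hT1
      have h1 := (Finset.mem_filter.1 (hTe1 hj)).2
      have h2 := (Finset.mem_filter.1 (hTf1 hj)).2
      exact edgeColour_proper hodd hn he.1.2 hf.1.2 (hTe hx) (hTf hx) (h1.symm.trans h2)

/-- for `𝐯 = (v₁,v₂)` and `𝐤 = (2,1)`,
`D(𝐯,𝐤,2) = min{C(v₁,2), v₂·⌊v₁/2⌋}`. -/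
theorem stmt5 (v₁ v₂ : ℕ) (h1 : 2 ≤ v₁) (h2 : 1 ≤ v₂) :
    genPackingNumber (Fin 2) 2 1 ![v₁, v₂] ![2, 1] = min (v₁.choose 2) (v₂ * (v₁ / 2)) := by
  obtain ⟨N, hodd, hn, hC⟩ := exists_numColours v₁ h1
  have hpack := isGenPacking_edgeBlocks (v₂ := v₂) hodd hn
  refine IsGreatest.csSup_eq ⟨⟨_, hpack, le_antisymm (card_le_of_packing hpack) ?_⟩, ?_⟩
  · rw [Finset.card_val, Finset.card_map]
    exact min_le_card_colour_lt hodd hn hC v₂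
  · rintro _ ⟨P, hP, rfl⟩
    exact card_le_of_packing hP
end

section
/- Let 𝐯 = (v₁,v₂,v₃) with 1 ≤ v₁ ≤ v₂ ≤ v₃, and let 𝐤 = (1,1,1). Then D(𝐯,𝐤,2) = v₁·v₂. -/
/-!
Every block is a triple of singletons. A packing contains at most one block through each pair of
points from the two smallest sets `X₁`, `X₂`, and every block contains exactly one such pair, so
there are at most `v₁ * v₂` blocks (`card_le_of_isGenPacking`). Conversely the triples
`(i, j, i + j mod v₃)` with `i < v₁`, `j < v₂` form a packing (`isGenPacking_latin`): any two
coordinates determine the third, because `v₁, v₂ ≤ v₃` and addition modulo `v₃` is cancellative.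
This is a `v₁ × v₂` Latin rectangle on `v₃` symbols.
-/

open Finset

/-- The triple of sets `(a, b, c)` as a dependent function on `Fin 3`, the form that blocks take
in `IsGenPacking`. -/
def triple {v₁ v₂ v₃ : ℕ} (a : Finset (Fin v₁)) (b : Finset (Fin v₂)) (c : Finset (Fin v₃)) :
    ∀ i : Fin 3, Finset (Fin (![v₁, v₂, v₃] i))
  | 0 => a
  | 1 => b
  | 2 => c

theorem card_le_of_isGenPacking {v₁ v₂ v₃ : ℕ}
    {P : Multiset (∀ i : Fin 3, Finset (Fin (![v₁, v₂, v₃] i)))}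
    (hP : IsGenPacking 2 1 ![v₁, v₂, v₃] ![1, 1, 1] P) : Multiset.card P ≤ v₁ * v₂ := by
  classical
  obtain ⟨hk, hpack⟩ := hP
  let f : (∀ i : Fin 3, Finset (Fin (![v₁, v₂, v₃] i))) → Finset (Fin v₁) × Finset (Fin v₂) :=
    fun B => (B 0, B 1)
  let S : Finset (Finset (Fin v₁) × Finset (Fin v₂)) :=
    powersetCard 1 univ ×ˢ powersetCard 1 univ
  have hS : S.card = v₁ * v₂ := by simp [S]
  have hmem : ∀ x ∈ P.map f, x ∈ S := by
    intro x hx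
    obtain ⟨B, hB, rfl⟩ := Multiset.mem_map.1 hx
    exact mem_product.2 ⟨mem_powersetCard.2 ⟨subset_univ _, hk B hB 0⟩,
      mem_powersetCard.2 ⟨subset_univ _, hk B hB 1⟩⟩
  have hcount : ∀ x ∈ S, (P.map f).count x ≤ 1 := by
    rintro ⟨a, b⟩ hx
    obtain ⟨ha, hb⟩ := mem_product.1 hx
    rw [Multiset.count_map]
    refine le_trans (Multiset.card_le_card ?_) (hpack ![1, 1, 0] ?_ ?_ (triple a b ∅) ?_)
    -- the decidability instance in `IsGenPacking` is not the one found for `Fin 3`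
    · suffices hle : P.filter (fun B => (a, b) = f B) ≤
          P.filter (fun B => ∀ i, triple a b ∅ i ⊆ B i) by convert hle
      rw [Multiset.le_filter]
      refine ⟨Multiset.filter_le _ _, fun B hB i => ?_⟩
      have hB' := (Multiset.mem_filter.1 hB).2
      have h0 : a = B 0 := congrArg Prod.fst hB'
      have h1 : b = B 1 := congrArg Prod.snd hB'
      fin_cases i
      · exact h0.subset
      · exact h1.subset
      · exact empty_subset _
    · intro i; fin_cases i <;> simp
    · simp [Fin.sum_univ_three]
    · intro i
      fin_cases i
      · exact (mem_powersetCard.1 ha).2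
      · exact (mem_powersetCard.1 hb).2
      · rfl
  calc Multiset.card P = ∑ x ∈ S, (P.map f).count x := by
        rw [Multiset.sum_count_eq_card hmem, Multiset.card_map]
    _ ≤ ∑ _x ∈ S, 1 := sum_le_sum hcount
    _ = v₁ * v₂ := by rw [sum_const, smul_eq_mul, mul_one, hS]

/-- The block `({i}, {j}, {i + j mod v₃})`. -/
def latinBlock {v₁ v₂ v₃ : ℕ} (h : 0 < v₃) (p : Fin v₁ × Fin v₂) :
    ∀ i : Fin 3, Finset (Fin (![v₁, v₂, v₃] i)) :=
  triple {p.1} {p.2} {⟨(p.1.val + p.2.val) % v₃, Nat.mod_lt _ h⟩}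

theorem isGenPacking_latin {v₁ v₂ v₃ : ℕ} (h : 0 < v₃) (h13 : v₁ ≤ v₃) (h23 : v₂ ≤ v₃) :
    IsGenPacking 2 1 ![v₁, v₂, v₃] ![1, 1, 1]
      ((univ : Finset (Fin v₁ × Fin v₂)).val.map (latinBlock h)) := by
  classical
  refine ⟨?_, ?_⟩
  · intro B hB i
    obtain ⟨p, -, rfl⟩ := Multiset.mem_map.1 hB
    fin_cases i <;> exact card_singleton _
  · intro t' ht' hsum T hT
    rw [Multiset.filter_map, Multiset.card_map]
    suffices hh : (univ.filter fun p : Fin v₁ × Fin v₂ => ∀ i, T i ⊆ latinBlock h p i).card ≤ 1 by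
      rw [card_def, filter_val] at hh
      convert hh
      exact Iff.rfl
    rw [card_le_one]
    rintro ⟨i, j⟩ hp ⟨i', j'⟩ hq
    replace hp := (mem_filter.1 hp).2
    replace hq := (mem_filter.1 hq).2
    have e0 : t' 0 = 1 → i = i' := by
      intro ht
      obtain ⟨x, hx⟩ := card_eq_one.1 ((hT 0).trans ht)
      have hx' : x ∈ T 0 := hx ▸ mem_singleton_self x
      exact (mem_singleton.1 (hp 0 hx')).symm.trans (mem_singleton.1 (hq 0 hx'))
    have e1 : t' 1 = 1 → j = j' := by
      intro ht
      obtain ⟨x, hx⟩ := card_eq_one.1 ((hT 1).trans ht)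
      have hx' : x ∈ T 1 := hx ▸ mem_singleton_self x
      exact (mem_singleton.1 (hp 1 hx')).symm.trans (mem_singleton.1 (hq 1 hx'))
    have e2 : t' 2 = 1 → i.val + j.val ≡ i'.val + j'.val [MOD v₃] := by
      intro ht
      obtain ⟨x, hx⟩ := card_eq_one.1 ((hT 2).trans ht)
      have hx' : x ∈ T 2 := hx ▸ mem_singleton_self x
      exact congrArg Fin.val
        ((mem_singleton.1 (hp 2 hx')).symm.trans (mem_singleton.1 (hq 2 hx')))
    have b0 : t' 0 ≤ 1 := ht' 0
    have b1 : t' 1 ≤ 1 := ht' 1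
    have b2 : t' 2 ≤ 1 := ht' 2
    rw [Fin.sum_univ_three] at hsum
    have hcases : (t' 0 = 1 ∧ t' 1 = 1) ∨ (t' 0 = 1 ∧ t' 2 = 1) ∨ (t' 1 = 1 ∧ t' 2 = 1) := by
      omega
    rcases hcases with ⟨ha, hb⟩ | ⟨ha, hb⟩ | ⟨ha, hb⟩
    · rw [e0 ha, e1 hb]
    · obtain rfl := e0 ha
      have hj : j = j' := Fin.ext (Nat.ModEq.eq_of_lt_of_lt
        (Nat.ModEq.add_left_cancel' _ (e2 hb)) (j.2.trans_le h23) (j'.2.trans_le h23))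
      rw [hj]
    · obtain rfl := e1 ha
      have hi : i = i' := Fin.ext (Nat.ModEq.eq_of_lt_of_lt
        (Nat.ModEq.add_right_cancel' _ (e2 hb)) (i.2.trans_le h13) (i'.2.trans_le h13))
      rw [hi]

/-- for `𝐯 = (v₁,v₂,v₃)` with `v₁ ≤ v₂ ≤ v₃` and `𝐤 = (1,1,1)`,
`D(𝐯,𝐤,2) = v₁·v₂`. -/
theorem stmt6 (v₁ v₂ v₃ : ℕ) (h1 : 1 ≤ v₁) (h12 : v₁ ≤ v₂) (h23 : v₂ ≤ v₃) :
    genPackingNumber (Fin 3) 2 1 ![v₁, v₂, v₃] ![1, 1, 1] = v₁ * v₂ := by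
  refine IsGreatest.csSup_eq ⟨?_, ?_⟩
  · exact ⟨_, isGenPacking_latin (by omega) (h12.trans h23) h23, by simp⟩
  · rintro N ⟨P, hP, rfl⟩
    exact card_le_of_isGenPacking hP
end

section
/- Let v₁ ≥ 3 and v₂ ≥ 1, and let 𝐯 = (v₁,v₂), 𝐤 = (3,1). If there exists a strong Kirkman signal set SKSS(v₁), then D(𝐯,𝐤,2) = min{ D(v₁,3,2), v₂·⌊v₁/3⌋ }, where D(v₁,3,2) is the ordinary packing number for block size 3 and t = 2. -/
/-!
Upper bound. A `2`-`((v₁,v₂),(3,1),1)` packing projects to an ordinary triple packing on the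
first part (the admissible tuple `(2,0)`), and for each point `y` of the second part the triples
of the blocks over `y` are pairwise disjoint (the tuple `(1,1)`), so there are at most `⌊v₁/3⌋`
of them (`card_le_mul`). Both packing numbers are genuine maxima because a packing has no
repeated block (`IsGenPacking.nodup`), hence has bounded size.

Lower bound. Number the colour classes of the signal set `0, …, s`, with the short class last.
Attaching to each triple whose colour is below `v₂` that colour as a point of the second part
gives a generalized packing (`isGenPacking_colour`). If `s < v₂` it uses every triple;
otherwise it uses `v₂` full classes of size `⌊v₁/3⌋`.
-/

open Finset

/-- An ordinary `2`-`(v,3,1)` packing: a family of 3-subsets of `Fin v` in which every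
pair of points lies in at most one block. -/
def IsTriplePacking (v : ℕ) (B : Finset (Finset (Fin v))) : Prop :=
  (∀ b ∈ B, b.card = 3) ∧
  ∀ p : Finset (Fin v), p.card = 2 → (B.filter fun b => p ⊆ b).card ≤ 1

/-- Existence of a strong Kirkman signal set `SKSS(v)`: a maximum `2`-`(v,3,1)` packing
together with a partition of its blocks into `s` colour classes of size `m = ⌊v/3⌋`
(each class consisting of pairwise disjoint blocks) and one further class of size `r`,
where `D(v,3,2) = s·m + r` and `0 ≤ r < m`. -/
def ExistsSKSS (v : ℕ) : Prop :=
  ∃ (B : Finset (Finset (Fin v))) (s r : ℕ) (C : Fin s → Finset (Finset (Fin v)))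
    (R : Finset (Finset (Fin v))),
    IsTriplePacking v B ∧
    B.card = ordPackingNumber v 3 2 1 ∧
    r < v / 3 ∧
    B.card = s * (v / 3) + r ∧
    (∀ a, (C a).card = v / 3) ∧ R.card = r ∧
    (∀ a, C a ⊆ B) ∧ R ⊆ B ∧
    (∀ a b, a ≠ b → Disjoint (C a) (C b)) ∧ (∀ a, Disjoint (C a) R) ∧
    (∀ b ∈ B, b ∈ R ∨ ∃ a, b ∈ C a) ∧
    (∀ a, ∀ b₁ ∈ C a, ∀ b₂ ∈ C a, b₁ ≠ b₂ → Disjoint b₁ b₂) ∧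
    (∀ b₁ ∈ R, ∀ b₂ ∈ R, b₁ ≠ b₂ → Disjoint b₁ b₂)

/-- A packing of index `1` has no repeated block: a block contains some admissible tuple. -/
theorem IsGenPacking.nodup {ι : Type} [Fintype ι] [DecidableEq ι] {t : ℕ} {v k : ι → ℕ}
    {P : Multiset (∀ i : ι, Finset (Fin (v i)))} (hP : IsGenPacking t 1 v k P)
    (t' : ι → ℕ) (hk : ∀ i, t' i ≤ k i) (ht : ∑ i, t' i = t) : P.Nodup := by
  classical
  rw [Multiset.nodup_iff_count_le_one]
  intro B
  by_cases hB : B ∈ P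
  · have hT : ∀ i, ∃ T ⊆ B i, T.card = t' i := fun i =>
      Finset.exists_subset_card_eq (by rw [hP.1 B hB i]; exact hk i)
    choose T hTB hTc using hT
    refine le_trans ?_ (hP.2 t' hk ht T hTc)
    rw [← Multiset.count_filter_of_pos (p := fun B => ∀ i, T i ⊆ B i) hTB]
    exact Multiset.count_le_card _ _
  · rw [Multiset.count_eq_zero_of_notMem hB]
    exact Nat.zero_le _

/-- As soon as an admissible tuple exists, the supremum defining the packing number is over a
bounded set, so it dominates the size of every packing. -/
theorem IsGenPacking.card_le_genPackingNumber {ι : Type} [Fintype ι] [DecidableEq ι] {t : ℕ}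
    {v k : ι → ℕ} {P : Multiset (∀ i : ι, Finset (Fin (v i)))} (hP : IsGenPacking t 1 v k P)
    (t' : ι → ℕ) (hk : ∀ i, t' i ≤ k i) (ht : ∑ i, t' i = t) :
    Multiset.card P ≤ genPackingNumber ι t 1 v k := by
  classical
  refine le_csSup ⟨Fintype.card (∀ i : ι, Finset (Fin (v i))), ?_⟩ ⟨P, hP, rfl⟩
  rintro N ⟨Q, hQ, rfl⟩
  exact Finset.card_le_univ (⟨Q, hQ.nodup t' hk ht⟩ : Finset (∀ i : ι, Finset (Fin (v i))))

/-- The decidability instances are plain implicit arguments so that the lemma applies to whichever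
instance a filter carries. -/
theorem card_filter_map_le {α β : Type*} (f : α → β) (s : Multiset α) {p : β → Prop}
    {q : α → Prop} {_ : DecidablePred p} {_ : DecidablePred q} (h : ∀ a, p (f a) → q a) :
    ((s.map f).filter p).card ≤ (s.filter q).card := by
  rw [Multiset.filter_map, Multiset.card_map]
  exact Multiset.card_le_card (Multiset.monotone_filter_right _ h)

theorem eq_of_card_filter_le_one {α : Type*} {s : Multiset α} (hs : s.Nodup) {p : α → Prop}
    {_ : DecidablePred p} (h : (s.filter p).card ≤ 1) {a b : α} (ha : a ∈ s) (hb : b ∈ s)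
    (hpa : p a) (hpb : p b) : a = b := by
  let F : Finset α := ⟨s.filter p, hs.filter p⟩
  exact Finset.card_le_one.1 (show F.card ≤ 1 from h) a (Multiset.mem_filter.2 ⟨ha, hpa⟩) b
    (Multiset.mem_filter.2 ⟨hb, hpb⟩)

/-- The block `(b, c)`. -/
def pairBlock {v₁ v₂ : ℕ} (b : Finset (Fin v₁)) (c : Finset (Fin v₂)) :
    ∀ i : Fin 2, Finset (Fin (![v₁, v₂] i))
  | 0 => b
  | 1 => c

theorem card_le_ordPackingNumber {v₁ v₂ : ℕ}
    {P : Multiset (∀ i : Fin 2, Finset (Fin (![v₁, v₂] i)))}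
    (hP : IsGenPacking 2 1 ![v₁, v₂] ![3, 1] P) :
    Multiset.card P ≤ ordPackingNumber v₁ 3 2 1 := by
  let f : (∀ i : Fin 2, Finset (Fin (![v₁, v₂] i))) → (Fin 1 → Finset (Fin v₁)) :=
    fun B _ => B 0
  rw [← Multiset.card_map f P]
  refine IsGenPacking.card_le_genPackingNumber (ι := Fin 1) (t := 2) (v := fun _ => v₁)
    (k := fun _ => 3) ⟨?_, ?_⟩ (fun _ => 2) (fun _ => by norm_num) (by simp)
  · intro B hB i
    obtain ⟨A, hA, rfl⟩ := Multiset.mem_map.1 hB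
    exact hP.1 A hA 0
  · intro t' hk ht T hT
    have h2 : (T 0).card = 2 := by
      rw [hT 0]; simpa using ht
    have key := hP.2 ![2, 0] (by intro i; fin_cases i <;> simp) (by simp)
      (pairBlock (T 0) ∅)
      (by intro i; fin_cases i; exacts [h2, Finset.card_empty])
    refine le_trans (card_filter_map_le f P ?_) key
    intro B hB i
    fin_cases i
    · exact hB 0
    · exact Finset.empty_subset _

/-- The triples over a fixed point of the second part are pairwise disjoint, so there are at most
`v₁ / 3` of them. -/
theorem card_le_mul {v₁ v₂ : ℕ}
    {P : Multiset (∀ i : Fin 2, Finset (Fin (![v₁, v₂] i)))}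
    (hP : IsGenPacking 2 1 ![v₁, v₂] ![3, 1] P) :
    Multiset.card P ≤ v₂ * (v₁ / 3) := by
  classical
  have hnd : P.Nodup := hP.nodup ![1, 1] (by intro i; fin_cases i <;> simp) (by simp)
  let F : Finset (∀ i : Fin 2, Finset (Fin (![v₁, v₂] i))) := ⟨P, hnd⟩
  let cls : Fin v₂ → Finset (∀ i : Fin 2, Finset (Fin (![v₁, v₂] i))) :=
    fun y => F.filter fun B => y ∈ (show Finset (Fin v₂) from B 1)
  have hcover : F ⊆ Finset.univ.biUnion cls := by
    intro B hB
    have h1 : (show Finset (Fin v₂) from B 1).card = 1 := hP.1 B hB 1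
    obtain ⟨y, hy⟩ := Finset.card_eq_one.1 h1
    refine Finset.mem_biUnion.2 ⟨y, Finset.mem_univ _, Finset.mem_filter.2 ⟨hB, ?_⟩⟩
    rw [hy]; exact Finset.mem_singleton_self y
  have hcls : ∀ y, (cls y).card ≤ v₁ / 3 := by
    intro y
    rw [Nat.le_div_iff_mul_le (by norm_num)]
    let g : (∀ i : Fin 2, Finset (Fin (![v₁, v₂] i))) → Finset (Fin v₁) := fun B => B 0
    have hdisj : ∀ A ∈ cls y, ∀ B ∈ cls y, A ≠ B → Disjoint (g A) (g B) := by
      intro A hA B hB hne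
      rw [Finset.disjoint_left]
      intro x hxA hxB
      apply hne
      have key := hP.2 ![1, 1] (by intro i; fin_cases i <;> simp) (by simp)
        (pairBlock ({x} : Finset (Fin v₁)) ({y} : Finset (Fin v₂)))
        (by intro i; fin_cases i <;> exact Finset.card_singleton _)
      have hmem : ∀ D ∈ cls y, x ∈ g D → ∀ i,
          pairBlock ({x} : Finset (Fin v₁)) ({y} : Finset (Fin v₂)) i ⊆ D i := by
        intro D hD hx i
        fin_cases i
        · exact Finset.singleton_subset_iff.2 hx
        · exact Finset.singleton_subset_iff.2 (Finset.mem_filter.1 hD).2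
      exact eq_of_card_filter_le_one hnd key (Finset.mem_filter.1 hA).1
        (Finset.mem_filter.1 hB).1 (hmem A hA hxA) (hmem B hB hxB)
    have hcard : ((cls y).biUnion g).card = (cls y).card * 3 := by
      rw [Finset.card_biUnion hdisj]
      exact Finset.sum_const_nat fun B hB => hP.1 B (Finset.mem_filter.1 hB).1 0
    rw [← hcard]
    simpa using Finset.card_le_univ ((cls y).biUnion g)
  calc Multiset.card P = F.card := rfl
    _ ≤ (Finset.univ.biUnion cls).card := Finset.card_le_card hcover
    _ ≤ (Finset.univ : Finset (Fin v₂)).card * (v₁ / 3) :=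
        Finset.card_biUnion_le_card_mul _ _ _ fun y _ => hcls y
    _ = v₂ * (v₁ / 3) := by simp

/-- A triple packing `G` whose blocks are coloured by the points of the second part, blocks of
the same colour being disjoint, yields a generalized packing. -/
theorem isGenPacking_colour {v₁ v₂ : ℕ} {G : Finset (Finset (Fin v₁))}
    (hG : IsTriplePacking v₁ G) (c : Finset (Fin v₁) → Fin v₂)
    (hc : ∀ a ∈ G, ∀ b ∈ G, c a = c b → a ≠ b → Disjoint a b) :
    IsGenPacking 2 1 ![v₁, v₂] ![3, 1]
      (G.val.map fun b => pairBlock b ({c b} : Finset (Fin v₂))) := by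
  classical
  constructor
  · intro B hB i
    obtain ⟨b, hb, rfl⟩ := Multiset.mem_map.1 hB
    fin_cases i
    · exact hG.1 b hb
    · exact Finset.card_singleton _
  · intro t' hk ht T hT
    have h1 : t' 1 ≤ 1 := hk 1
    rw [Fin.sum_univ_two] at ht
    let T₀ : Finset (Fin v₁) := T 0
    let T₁ : Finset (Fin v₂) := T 1
    have hT₀ : T₀.card = t' 0 := hT 0
    have hT₁ : T₁.card = t' 1 := hT 1
    have hle : (G.filter fun b => T₀ ⊆ b ∧ T₁ ⊆ {c b}).card ≤ 1 := by
      rcases Nat.le_one_iff_eq_zero_or_eq_one.1 h1 with h | h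
      · refine le_trans (Finset.card_le_card ?_) (hG.2 T₀ (by omega))
        exact Finset.monotone_filter_right _ fun b _ hb => hb.1
      · obtain ⟨x, hx⟩ := Finset.card_eq_one.1 (show T₀.card = 1 by omega)
        obtain ⟨y, hy⟩ := Finset.card_eq_one.1 (show T₁.card = 1 by omega)
        rw [Finset.card_le_one]
        intro a ha b hb
        simp only [Finset.mem_filter, hx, hy, Finset.singleton_subset_iff,
          Finset.mem_singleton] at ha hb
        by_contra hne
        exact Finset.disjoint_left.1
          (hc a ha.1 b hb.1 (ha.2.2.symm.trans hb.2.2) hne) ha.2.1 hb.2.1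
    refine le_trans (card_filter_map_le _ G.val ?_) hle
    intro b hb
    exact ⟨hb 0, hb 1⟩

/-- The signal set, with its first `v₂` colour classes lifted to the points of the second part,
attains the bound. -/
theorem exists_colour_packing {v₁ v₂ : ℕ} (h2 : 1 ≤ v₂) (hskss : ExistsSKSS v₁) :
    ∃ P, IsGenPacking 2 1 ![v₁, v₂] ![3, 1] P ∧
      min (ordPackingNumber v₁ 3 2 1) (v₂ * (v₁ / 3)) ≤ Multiset.card P := by
  classical
  obtain ⟨B, s, r, C, R, hB, hBD, -, -, hCc, -, hCB, -, hCC, hCR, hcov, hCd, hRd⟩ := hskss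
  have hex : ∀ b, ∃ n ≤ s, b ∈ B → (n = s ∧ b ∈ R) ∨ ∃ h : n < s, b ∈ C ⟨n, h⟩ := by
    intro b
    by_cases hb : b ∈ B
    · rcases hcov b hb with h | ⟨a, ha⟩
      · exact ⟨s, le_rfl, fun _ => Or.inl ⟨rfl, h⟩⟩
      · exact ⟨a, a.2.le, fun _ => Or.inr ⟨a.2, ha⟩⟩
    · exact ⟨0, Nat.zero_le _, fun h => absurd h hb⟩
  choose col hcol_le hcol using hex
  have hcol_C : ∀ a, ∀ b ∈ C a, col b = a := by
    intro a b hb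
    rcases hcol b (hCB a hb) with ⟨-, hR⟩ | ⟨h, hC⟩
    · exact absurd hR (Finset.disjoint_left.1 (hCR a) hb)
    · by_contra hne
      exact Finset.disjoint_left.1
        (hCC a ⟨col b, h⟩ fun he => hne (congrArg Fin.val he).symm) hb hC
  let G := B.filter fun b => col b < v₂
  -- Reduction mod `v₂` only makes the colouring total: on `G` it does nothing.
  let c : Finset (Fin v₁) → Fin v₂ := fun b => ⟨col b % v₂, Nat.mod_lt _ h2⟩
  have hG : IsTriplePacking v₁ G :=
    ⟨fun b hb => hB.1 b (Finset.mem_filter.1 hb).1, fun p hp =>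
      (Finset.card_le_card (Finset.filter_subset_filter _ (Finset.filter_subset _ _))).trans
        (hB.2 p hp)⟩
  have hc : ∀ a ∈ G, ∀ b ∈ G, c a = c b → a ≠ b → Disjoint a b := by
    intro a ha b hb hab hne
    obtain ⟨haB, hav⟩ := Finset.mem_filter.1 ha
    obtain ⟨hbB, hbv⟩ := Finset.mem_filter.1 hb
    have hval : col a = col b := by
      have := congrArg Fin.val hab
      simpa only [c, Nat.mod_eq_of_lt hav, Nat.mod_eq_of_lt hbv] using this
    rcases hcol a haB with ⟨hs, hR⟩ | ⟨h, hC⟩ <;> rcases hcol b hbB with ⟨hs', hR'⟩ | ⟨h', hC'⟩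
    · exact hRd a hR b hR' hne
    · omega
    · omega
    · have he : (⟨col b, h'⟩ : Fin s) = ⟨col a, h⟩ := Fin.ext hval.symm
      rw [he] at hC'
      exact hCd _ a hC b hC' hne
  refine ⟨_, isGenPacking_colour hG c hc, ?_⟩
  rw [Multiset.card_map]
  change _ ≤ G.card
  rcases lt_or_ge s v₂ with hs | hs
  · refine (min_le_left _ _).trans ?_
    have hGB : G = B := Finset.filter_true_of_mem fun b _ => (hcol_le b).trans_lt hs
    rw [hGB, hBD]
  · refine (min_le_right _ _).trans ?_
    have hcard : (Finset.univ.biUnion fun y : Fin v₂ => C (Fin.castLE hs y)).card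
        = v₂ * (v₁ / 3) := by
      rw [Finset.card_biUnion fun x _ y _ hxy => hCC _ _ fun h =>
        hxy (Fin.castLE_injective hs h)]
      simp [hCc]
    rw [← hcard]
    refine Finset.card_le_card fun b hb => ?_
    obtain ⟨y, -, hy⟩ := Finset.mem_biUnion.1 hb
    refine Finset.mem_filter.2 ⟨hCB _ hy, ?_⟩
    rw [hcol_C _ b hy]
    exact y.2

/-- if a strong Kirkman signal set `SKSS(v₁)` exists, then for `𝐯 = (v₁,v₂)`
and `𝐤 = (3,1)` we have `D(𝐯,𝐤,2) = min{D(v₁,3,2), v₂·⌊v₁/3⌋}`. -/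
theorem stmt7 (v₁ v₂ : ℕ) (h1 : 3 ≤ v₁) (h2 : 1 ≤ v₂) (hskss : ExistsSKSS v₁) :
    genPackingNumber (Fin 2) 2 1 ![v₁, v₂] ![3, 1] =
      min (ordPackingNumber v₁ 3 2 1) (v₂ * (v₁ / 3)) := by
  apply le_antisymm
  · refine csSup_le' ?_
    rintro N ⟨P, hP, rfl⟩
    exact le_min (card_le_ordPackingNumber hP) (card_le_mul hP)
  · obtain ⟨P, hP, hle⟩ := exists_colour_packing h2 hskss
    exact hle.trans (hP.card_le_genPackingNumber ![1, 1]
      (by intro i; fin_cases i <;> simp) (by simp))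
end

section
/- Let 𝐯 = (7,v₂) with v₂ ≥ 1 and 𝐤 = (3,1). Then D(𝐯,𝐤,2) = 2 if v₂ = 1; 3 if v₂ = 2; 4 if v₂ = 3; 5 if v₂ = 4 or v₂ = 5; 6 if v₂ = 6; and 7 if v₂ ≥ 7. -/
/-!
A packing for `𝐤 = (3,1)`, `t = 2` is a family of blocks any two of which share at most one point
in total, counting both coordinates (`isGenPacking_map_iff`). For `n` blocks let `r x` be the number
of blocks through a point `x` of `X₁` and `s y` the same for `y` in `X₂`. Counting ordered pairs of
blocks with a common point gives `∑ r² + ∑ s² ≤ n² + 3n` (`degree_sq_bound`), while `∑ r = 3n` and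
`∑ s = n`. Since `(r - q)(r - q - 1) ≥ 0` for all integers `r`, `q`, the squares are bounded below by
`∑ r² ≥ (2q+1)·3n - 7·q(q+1)`, and similarly for `s`. For a suitable choice of the two values of `q`
this contradicts the upper bound as soon as `n` exceeds the claimed value by one, and larger packings
contain packings of that size. The lower bounds are explicit: Fano-plane lines with distinct second
points when `v₂ ≥ 6`, and for smaller `v₂` triple systems with a disjoint pair sharing its
second point.
-/

open Finset

/-- Double counting of the pairs of members of a family through a common point. -/
lemma sum_degree_sq {α : Type} [Fintype α] [DecidableEq α] {n : ℕ} (A : Fin n → Finset α) :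
    ∑ x, (#{i | x ∈ A i}) ^ 2 = ∑ i, ∑ j, #(A i ∩ A j) := by
  have h1 : ∀ x, (#{i | x ∈ A i}) ^ 2 = ∑ i, ∑ j, if x ∈ A i ∩ A j then 1 else 0 := by
    intro x
    rw [sq, Finset.card_filter, Finset.sum_mul_sum]
    refine Finset.sum_congr rfl fun i _ => Finset.sum_congr rfl fun j _ => ?_
    by_cases hi : x ∈ A i <;> by_cases hj : x ∈ A j <;> simp [hi, hj]
  simp_rw [h1]
  rw [Finset.sum_comm]
  refine Finset.sum_congr rfl fun i _ => ?_
  rw [Finset.sum_comm]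
  refine Finset.sum_congr rfl fun j _ => ?_
  rw [← Finset.card_filter, Finset.filter_mem_eq_inter, Finset.univ_inter]

lemma sum_degree {α : Type} [Fintype α] [DecidableEq α] {n : ℕ} (A : Fin n → Finset α) :
    ∑ x, #{i | x ∈ A i} = ∑ i, #(A i) := by
  simp_rw [Finset.card_filter]
  rw [Finset.sum_comm]
  refine Finset.sum_congr rfl fun j _ => ?_
  rw [← Finset.card_filter]
  simp

/-- Summed form of `(r - q) * (r - q - 1) ≥ 0`, applied to the degrees `r` of a family. -/
lemma sum_degree_sq_ge {α : Type} [Fintype α] [DecidableEq α] {n : ℕ} (A : Fin n → Finset α)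
    (q : ℕ) :
    (2 * q + 1) * ∑ i, #(A i) ≤ ∑ i, ∑ j, #(A i ∩ A j) + Fintype.card α * (q * (q + 1)) := by
  rw [← sum_degree_sq, ← sum_degree, Finset.mul_sum]
  have : Fintype.card α * (q * (q + 1)) = ∑ _x : α, q * (q + 1) := by simp
  rw [this, ← Finset.sum_add_distrib]
  refine Finset.sum_le_sum fun x _ => ?_
  generalize #{i | x ∈ A i} = r
  rcases le_or_gt r q with h | h
  · obtain ⟨d, rfl⟩ := Nat.exists_eq_add_of_le h
    nlinarith [Nat.zero_le d, Nat.zero_le (d * d)]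
  · obtain ⟨d, rfl⟩ := Nat.exists_eq_add_of_lt h
    nlinarith [Nat.zero_le d, Nat.zero_le (d * d)]

/-- For `𝐤 = (3,1)` and `t = 2`, an indexed family of blocks is a packing iff two distinct members
have at most one common point, both coordinates taken together. -/
lemma isGenPacking_map_iff {v : Fin 2 → ℕ} {n : ℕ} (f : Fin n → ∀ i : Fin 2, Finset (Fin (v i))) :
    IsGenPacking 2 1 v ![3, 1] (Finset.univ.val.map f) ↔
      (∀ i, #(f i 0) = 3 ∧ #(f i 1) = 1) ∧
        ∀ i j, i ≠ j → #(f i 0 ∩ f j 0) + #(f i 1 ∩ f j 1) ≤ 1 := by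
  have hcard : ∀ (T : ∀ i : Fin 2, Finset (Fin (v i)))
      [DecidablePred fun B : ∀ i : Fin 2, Finset (Fin (v i)) => ∀ i, T i ⊆ B i],
      ((Finset.univ.val.map f).filter (fun B => ∀ i, T i ⊆ B i)).card ≤ 1 ↔
        ∀ i j, (∀ a, T a ⊆ f i a) → (∀ a, T a ⊆ f j a) → i = j := by
    intro T _
    rw [Multiset.filter_map, Multiset.card_map]
    change #(Finset.univ.filter ((fun B : ∀ i : Fin 2, Finset (Fin (v i)) => ∀ i, T i ⊆ B i) ∘ f))
      ≤ 1 ↔ _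
    rw [Finset.card_le_one]
    simp only [Finset.mem_filter, Finset.mem_univ, true_and, Function.comp]
    exact ⟨fun h i j hi hj => h i hi j hj, fun h i hi j hj => h i j hi hj⟩
  unfold IsGenPacking
  simp only [hcard]
  constructor
  · rintro ⟨hk, hp⟩
    have hk' : ∀ i, #(f i 0) = 3 ∧ #(f i 1) = 1 := fun i => by
      have := hk (f i) (Multiset.mem_map_of_mem f (Finset.mem_univ i))
      exact ⟨this 0, this 1⟩
    refine ⟨hk', fun i j hij => ?_⟩
    by_contra! hlt
    have h1 : #(f i 1 ∩ f j 1) ≤ 1 :=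
      (Finset.card_le_card Finset.inter_subset_left).trans (hk' i).2.le
    -- the common part in `X₂` together with enough common points of `X₁`
    obtain ⟨T0, hT0, hT0c⟩ := Finset.exists_subset_card_eq
      (show 2 - #(f i 1 ∩ f j 1) ≤ #(f i 0 ∩ f j 0) by omega)
    refine hij (hp ![2 - #(f i 1 ∩ f j 1), #(f i 1 ∩ f j 1)] ?_ ?_
      (Fin.cons T0 (Fin.cons (f i 1 ∩ f j 1) finZeroElim)) ?_ i j ?_ ?_)
    · rw [Fin.forall_fin_two]; exact ⟨by simp; omega, by simpa using h1⟩
    · simp [Fin.sum_univ_two]; omega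
    · rw [Fin.forall_fin_two]; exact ⟨hT0c, rfl⟩
    · rw [Fin.forall_fin_two]
      exact ⟨hT0.trans Finset.inter_subset_left, Finset.inter_subset_left⟩
    · rw [Fin.forall_fin_two]
      exact ⟨hT0.trans Finset.inter_subset_right, Finset.inter_subset_right⟩
  · rintro ⟨hk, hp⟩
    refine ⟨?_, ?_⟩
    · intro B hB
      obtain ⟨i, -, rfl⟩ := Multiset.mem_map.1 hB
      rw [Fin.forall_fin_two]
      exact hk i
    · intro t' _ hsum T hT i j hi hj
      by_contra hij
      have h0 := Finset.card_le_card (Finset.subset_inter (hi 0) (hj 0))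
      have h1 := Finset.card_le_card (Finset.subset_inter (hi 1) (hj 1))
      have := hp i j hij
      rw [hT] at h0 h1
      rw [Fin.sum_univ_two] at hsum
      omega

/-- The ordered pairs of distinct blocks contribute at most `1` each to the left-hand side and the
diagonal pairs contribute `4`. -/
lemma degree_sq_bound {α β : Type} [DecidableEq α] [DecidableEq β] {n : ℕ}
    (A : Fin n → Finset α) (C : Fin n → Finset β) (hA : ∀ i, #(A i) = 3) (hC : ∀ i, #(C i) = 1)
    (h : ∀ i j, i ≠ j → #(A i ∩ A j) + #(C i ∩ C j) ≤ 1) :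
    ∑ i, ∑ j, #(A i ∩ A j) + ∑ i, ∑ j, #(C i ∩ C j) ≤ n ^ 2 + 3 * n := by
  rw [← Finset.sum_add_distrib]
  simp_rw [← Finset.sum_add_distrib]
  calc ∑ i, ∑ j, (#(A i ∩ A j) + #(C i ∩ C j))
      ≤ ∑ i : Fin n, ∑ j : Fin n, (1 + if i = j then 3 else 0) := by
        refine Finset.sum_le_sum fun i _ => Finset.sum_le_sum fun j _ => ?_
        by_cases hij : i = j
        · subst hij; simp [hA, hC]
        · simpa [hij] using h i j hij
    _ = n ^ 2 + 3 * n := by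
        simp [Finset.sum_add_distrib]; ring

lemma IsGenPacking.mono {ι : Type} [Fintype ι] [DecidableEq ι] {t lam : ℕ} {v k : ι → ℕ}
    {P Q : Multiset (∀ i : ι, Finset (Fin (v i)))} (hP : IsGenPacking t lam v k P) (h : Q ≤ P) :
    IsGenPacking t lam v k Q :=
  ⟨fun B hB => hP.1 B (Multiset.mem_of_le h hB), fun s h1 h2 T hT =>
    (Multiset.card_le_card (Multiset.filter_le_filter _ h)).trans (hP.2 s h1 h2 T hT)⟩

/-- If the value `n` violates the degree inequalities for some choice of the slopes `q`, `p`, then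
every packing has fewer than `n` blocks. -/
lemma card_lt_of_packing {v₂ n : ℕ} (q p : ℕ)
    (hn : n ^ 2 + 3 * n + 7 * (q * (q + 1)) + v₂ * (p * (p + 1))
      < (2 * q + 1) * (n * 3) + (2 * p + 1) * n)
    {P : Multiset (∀ i : Fin 2, Finset (Fin (![7, v₂] i)))}
    (hP : IsGenPacking 2 1 ![7, v₂] ![3, 1] P) : P.card < n := by
  by_contra! hle
  obtain ⟨Q, hQP, hQ⟩ : ∃ Q ≤ P, Q.card = n := by
    obtain ⟨Q, hQ⟩ := Multiset.card_pos_iff_exists_mem.1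
      ((Multiset.card_powersetCard n P).symm ▸ Nat.choose_pos hle)
    exact ⟨Q, Multiset.mem_powersetCard.1 hQ⟩
  have hQpack := hP.mono hQP
  obtain ⟨f, rfl⟩ : ∃ f : Fin n → ∀ i : Fin 2, Finset (Fin (![7, v₂] i)),
      Q = Finset.univ.val.map f := by
    subst hQ
    obtain ⟨l, rfl⟩ := Quot.exists_rep Q
    exact ⟨l.get, (by rw [Fin.univ_val_map, List.ofFn_get] :
      Finset.univ.val.map l.get = (l : Multiset _)).symm⟩
  obtain ⟨hk, hp⟩ := (isGenPacking_map_iff f).1 hQpack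
  have hub := degree_sq_bound (fun i => f i 0) (fun i => f i 1) (fun i => (hk i).1)
    (fun i => (hk i).2) hp
  have hA := sum_degree_sq_ge (fun i => f i 0) q
  have hC := sum_degree_sq_ge (fun i => f i 1) p
  have e0 : Fintype.card (Fin (![7, v₂] 0)) = 7 := Fintype.card_fin 7
  have e1 : Fintype.card (Fin (![7, v₂] 1)) = v₂ := Fintype.card_fin v₂
  simp only [hk, e0, e1, Finset.sum_const, Finset.card_univ, Fintype.card_fin, smul_eq_mul,
    mul_one] at hA hC
  omega

/-- A packing number is determined by an explicit packing with triples `A i` and second points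
`c i`, and a violation of the degree inequalities by `n + 1`. -/
lemma genPackingNumber_eq {v₂ n : ℕ} (A : Fin n → Finset (Fin 7)) (c : Fin n → Fin v₂)
    (hA : ∀ i, #(A i) = 3)
    (hp : ∀ i j, i ≠ j → #(A i ∩ A j) ≤ 1 ∧ (c i = c j → #(A i ∩ A j) = 0)) (q p : ℕ)
    (hn : (n + 1) ^ 2 + 3 * (n + 1) + 7 * (q * (q + 1)) + v₂ * (p * (p + 1))
      < (2 * q + 1) * ((n + 1) * 3) + (2 * p + 1) * (n + 1)) :
    genPackingNumber (Fin 2) 2 1 ![7, v₂] ![3, 1] = n := by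
  refine IsGreatest.csSup_eq ⟨?_, ?_⟩
  · let f : Fin n → ∀ i : Fin 2, Finset (Fin (![7, v₂] i)) := fun i =>
      Fin.cons (A i) (Fin.cons ({c i} : Finset (Fin v₂)) finZeroElim)
    refine ⟨Finset.univ.val.map f, (isGenPacking_map_iff f).2 ⟨fun i => ⟨hA i, ?_⟩, ?_⟩, by simp⟩
    · exact Finset.card_singleton (c i)
    · intro i j hij
      change #(A i ∩ A j) + #(({c i} : Finset (Fin v₂)) ∩ {c j}) ≤ 1
      obtain ⟨h1, h2⟩ := hp i j hij
      by_cases hc : c i = c j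
      · simp [hc, h2 hc]
      · have : ({c i} : Finset (Fin v₂)) ∩ {c j} = ∅ := by
          rw [← Finset.disjoint_iff_inter_eq_empty]; simpa using hc
        simpa [this] using h1
  · rintro N ⟨P, hP, rfl⟩
    exact Nat.lt_succ_iff.1 (card_lt_of_packing q p hn hP)

/-- the generalized packing numbers for `𝐯 = (7,v₂)` and `𝐤 = (3,1)`. -/
theorem stmt8 (v₂ : ℕ) (h : 1 ≤ v₂) :
    (v₂ = 1 → genPackingNumber (Fin 2) 2 1 ![7, v₂] ![3, 1] = 2) ∧
    (v₂ = 2 → genPackingNumber (Fin 2) 2 1 ![7, v₂] ![3, 1] = 3) ∧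
    (v₂ = 3 → genPackingNumber (Fin 2) 2 1 ![7, v₂] ![3, 1] = 4) ∧
    (v₂ = 4 ∨ v₂ = 5 → genPackingNumber (Fin 2) 2 1 ![7, v₂] ![3, 1] = 5) ∧
    (v₂ = 6 → genPackingNumber (Fin 2) 2 1 ![7, v₂] ![3, 1] = 6) ∧
    (7 ≤ v₂ → genPackingNumber (Fin 2) 2 1 ![7, v₂] ![3, 1] = 7) := by
  refine ⟨?_, ?_, ?_, ?_, ?_, ?_⟩
  · rintro rfl
    exact genPackingNumber_eq ![{0, 1, 2}, {3, 4, 5}] ![0, 0] (by decide) (by decide) 1 1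
      (by norm_num)
  · rintro rfl
    exact genPackingNumber_eq ![{0, 1, 2}, {3, 4, 5}, {0, 3, 6}] ![0, 0, 1] (by decide)
      (by decide) 1 1 (by norm_num)
  · rintro rfl
    exact genPackingNumber_eq ![{0, 1, 2}, {3, 4, 5}, {0, 3, 6}, {1, 4, 6}] ![0, 0, 1, 2]
      (by decide) (by decide) 2 1 (by norm_num)
  · rintro (rfl | rfl)
    · exact genPackingNumber_eq ![{0, 1, 2}, {3, 4, 5}, {0, 3, 6}, {1, 4, 6}, {2, 5, 6}]
        ![0, 0, 1, 2, 3] (by decide) (by decide) 2 1 (by norm_num)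
    · exact genPackingNumber_eq ![{0, 1, 2}, {3, 4, 5}, {0, 3, 6}, {1, 4, 6}, {2, 5, 6}]
        ![0, 0, 1, 2, 3] (by decide) (by decide) 2 1 (by norm_num)
  · rintro rfl
    exact genPackingNumber_eq
      ![{0, 1, 3}, {1, 2, 4}, {2, 3, 5}, {3, 4, 6}, {4, 5, 0}, {5, 6, 1}]
      id (by decide) (by decide) 2 1 (by norm_num)
  · intro h7
    have hF : ∀ i j : Fin 7, i ≠ j →
        #((![{0, 1, 3}, {1, 2, 4}, {2, 3, 5}, {3, 4, 6}, {4, 5, 0}, {5, 6, 1}, {6, 0, 2}] :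
            Fin 7 → Finset (Fin 7)) i ∩
          (![{0, 1, 3}, {1, 2, 4}, {2, 3, 5}, {3, 4, 6}, {4, 5, 0}, {5, 6, 1}, {6, 0, 2}] :
            Fin 7 → Finset (Fin 7)) j) ≤ 1 := by decide
    exact genPackingNumber_eq
      ![{0, 1, 3}, {1, 2, 4}, {2, 3, 5}, {3, 4, 6}, {4, 5, 0}, {5, 6, 1}, {6, 0, 2}]
      (Fin.castLE h7) (by decide)
      (fun i j hij => ⟨hF i j hij, fun hc => absurd (Fin.castLE_injective h7 hc) hij⟩) 3 0
      (by norm_num)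
end

section
/- Let 𝐯 = (12,v₂) with v₂ ≥ 1 and 𝐤 = (3,1). Then D(𝐯,𝐤,2) = 4·v₂ if 1 ≤ v₂ ≤ 4; 19 if v₂ = 5 or v₂ = 6; and 20 if v₂ ≥ 7. -/
/-!
For `𝐯 = (12, v)`, `𝐤 = (3, 1)`, `t = 2`, `λ = 1`, a generalized packing is a family of triples on
12 points, pairwise meeting in at most one point, coloured with `v` colours so that triples of the
same colour are disjoint (`IsColouredTriples`).

Upper bounds: a point lies in at most `⌊11/2⌋ = 5` triples, so there are at most `12 · 5 / 3 = 20`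
triples, and a colour class has at most 4 triples. Lower bounds: `triples19` splits into parallel
classes of sizes 4, 4, 4, 4, 3, and `triples20` splits into seven partial parallel classes.

It remains to exclude 20 triples with at most 6 colours (`IsColouredTriples.ne_twenty`). Then every
point lies in exactly 5 triples, so the uncovered pairs (the leave) form a perfect matching. As
`4 + 5 · 3 < 20`, at least two colour classes are full, i.e. partition the point set. Two
edge-disjoint full classes form, up to relabelling, the rows and the columns of the twelve
off-diagonal cells of a `4 × 4` array (`exists_labelling`). No packing with 20 triples contains both
(`no_system`): this is an exact cover problem, namely to partition the remaining pairs of points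
into triangles and a perfect matching, and a backtracking search (`extendable`) of under a thousand
branching nodes, proved complete in `extendable_of_chosen` and evaluated by the kernel in
`not_extendable`, shows that it has no solution.
-/

open Finset

/-! ### The exact cover search -/

/-- Bit mask of the unordered pair `{x, y}` of points in `{0, …, 11}`: it sets both bits `12 x + y`
and `12 y + x`. The bits `12 x + x = 13 x` are not used by pairs. -/
def edgeMask (x y : ℕ) : ℕ := 2 ^ (12 * x + y) ||| 2 ^ (12 * y + x)

/-- Bit mask of the three pairs inside the triple `{x, y, z}`. -/
def tripleMask (x y z : ℕ) : ℕ := edgeMask x y ||| edgeMask x z ||| edgeMask y z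

/-- Bit mask of the pair `{x, y}` used as an edge of the leave. The additional bits `13 x` and `13 y`
record that the points `x` and `y` have been matched, so that leave edges are disjoint. -/
def leaveMask (x y : ℕ) : ℕ := edgeMask x y ||| 2 ^ (13 * x) ||| 2 ^ (13 * y)

/-- Backtracking exact cover search. The mask `u` is the part covered so far; the pairs in the list
are treated in order, each one not yet covered being covered either by a leave edge or by a triple
disjoint from `u`. The value `false` means that `u` has no extension covering all listed pairs. -/
def extendable : List (ℕ × ℕ) → ℕ → Bool
  | [], _ => true
  | (x, y) :: r, u =>
    if u.testBit (12 * x + y) then extendable r u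
    else
      (leaveMask x y &&& u == 0 && extendable r (u ||| leaveMask x y)) ||
      (List.range 12).any fun z =>
        z != x && z != y && tripleMask x y z &&& u == 0 && extendable r (u ||| tripleMask x y z)

/-- All pairs of entries of the second list, in lexicographic order of positions, appended to the
first. -/
def pairList : List (ℕ × ℕ) → List ℕ → List (ℕ × ℕ)
  | acc, [] => acc
  | acc, x :: r => pairList (acc ++ r.map fun y => (x, y)) r

/-- The 66 pairs of points, in an order that keeps the search tree small. -/
def pairOrder : List (ℕ × ℕ) := pairList [] [10, 1, 9, 8, 3, 11, 6, 0, 7, 4, 2, 5]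

/-- The pairs covered by the rows and columns of the array of `cellRow` and `cellCol`. -/
def startMask : ℕ :=
  0 ||| tripleMask 0 1 2 ||| tripleMask 3 4 5 ||| tripleMask 6 7 8 ||| tripleMask 9 10 11
    ||| tripleMask 5 7 9 ||| tripleMask 0 8 10 ||| tripleMask 1 3 11 ||| tripleMask 2 4 6

set_option maxRecDepth 100000 in
theorem not_extendable : extendable pairOrder startMask = false := by decide +kernel

theorem pairOrder_mem : ∀ p ∈ pairOrder, p.1 < 12 ∧ p.2 < 12 ∧ p.1 ≠ p.2 := by decide +kernel

/-- The masks of the blocks of a system with triples `R` and leave edges `L`. -/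
def Chosen (R : Fin 12 → Fin 12 → Fin 12 → Prop) (L : Fin 12 → Fin 12 → Prop) (m : ℕ) : Prop :=
  (∃ x y z : Fin 12, R x y z ∧ m = tripleMask x y z) ∨ ∃ x y : Fin 12, L x y ∧ m = leaveMask x y

theorem edgeMask_comm (x y : ℕ) : edgeMask x y = edgeMask y x := Nat.lor_comm _ _

theorem tripleMask_swap (x y z : ℕ) : tripleMask x y z = tripleMask y x z := by
  rw [tripleMask, tripleMask, edgeMask_comm x y, Nat.lor_assoc, Nat.lor_assoc,
    Nat.lor_comm (edgeMask x z)]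

theorem tripleMask_swap' (x y z : ℕ) : tripleMask x y z = tripleMask x z y := by
  rw [tripleMask, tripleMask, edgeMask_comm y z, Nat.lor_comm (edgeMask x y)]

theorem leaveMask_comm (x y : ℕ) : leaveMask x y = leaveMask y x := by
  rw [leaveMask, leaveMask, edgeMask_comm, Nat.lor_assoc, Nat.lor_assoc, Nat.lor_comm (2 ^ (13 * x))]

theorem testBit_edgeMask (x y i : ℕ) :
    (edgeMask x y).testBit i = true ↔ i = 12 * x + y ∨ i = 12 * y + x := by
  simp [edgeMask, Nat.testBit_or, Nat.testBit_two_pow, @eq_comm _ i]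

section
variable {R : Fin 12 → Fin 12 → Fin 12 → Prop} {L : Fin 12 → Fin 12 → Prop}

/-- A bit of a triple mask is the leading pair of some reordering of the triple. -/
theorem exists_of_testBit_tripleMask (h1 : ∀ x y z, R x y z → R y x z)
    (h2 : ∀ x y z, R x y z → R x z y) {x y z : Fin 12} (h : R x y z) {i : ℕ}
    (hi : (tripleMask x y z).testBit i = true) :
    ∃ x' y' z' : Fin 12, R x' y' z' ∧ tripleMask x y z = tripleMask x' y' z' ∧
      i = 12 * (x' : ℕ) + y' := by
  simp only [tripleMask, Nat.testBit_or, Bool.or_eq_true, testBit_edgeMask] at hi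
  have e1 := tripleMask_swap x y z
  have e2 := tripleMask_swap' x y z
  have e3 := tripleMask_swap x z y
  have e4 := tripleMask_swap' y x z
  have e5 := tripleMask_swap y z x
  rcases hi with ((hi | hi) | hi | hi) | hi | hi
  · exact ⟨x, y, z, h, rfl, hi⟩
  · exact ⟨y, x, z, h1 _ _ _ h, e1, hi⟩
  · exact ⟨x, z, y, h2 _ _ _ h, e2, hi⟩
  · exact ⟨z, x, y, h1 _ _ _ (h2 _ _ _ h), e2.trans e3, hi⟩
  · exact ⟨y, z, x, h2 _ _ _ (h1 _ _ _ h), e1.trans e4, hi⟩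
  · exact ⟨z, y, x, h1 _ _ _ (h2 _ _ _ (h1 _ _ _ h)), (e1.trans e4).trans e5, hi⟩

theorem exists_of_testBit_leaveMask (hL : ∀ x y, L x y → L y x) {x y : Fin 12} (h : L x y) {i : ℕ}
    (hi : (leaveMask x y).testBit i = true) :
    ∃ x' y' : Fin 12, L x' y' ∧ leaveMask x y = leaveMask x' y' ∧
      (i = 12 * (x' : ℕ) + y' ∨ i = 13 * (x' : ℕ)) := by
  simp only [leaveMask, Nat.testBit_or, Bool.or_eq_true, testBit_edgeMask, Nat.testBit_two_pow,
    decide_eq_true_eq] at hi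
  rcases hi with ((hi | hi) | hi) | hi
  · exact ⟨x, y, h, rfl, .inl hi⟩
  · exact ⟨y, x, hL _ _ h, leaveMask_comm _ _, .inl hi⟩
  · exact ⟨x, y, h, rfl, .inr hi.symm⟩
  · exact ⟨y, x, hL _ _ h, leaveMask_comm _ _, .inr hi.symm⟩

/-- Distinct blocks of a system have disjoint masks, provided that a pair lies in at most one triple,
the leave is a matching, and no leave edge lies in a triple. -/
theorem chosen_unique (h1 : ∀ x y z, R x y z → R y x z)
    (h2 : ∀ x y z, R x y z → R x z y) (hne : ∀ x y z, R x y z → x ≠ y)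
    (hu : ∀ x y z z', R x y z → R x y z' → z = z')
    (hL : ∀ x y, L x y → L y x) (hLne : ∀ x y, L x y → x ≠ y)
    (hLu : ∀ x y y', L x y → L x y' → y = y')
    (hRL : ∀ x y z, R x y z → ¬ L x y)
    {m m' i : ℕ} (hm : Chosen R L m) (hm' : Chosen R L m')
    (hi : m.testBit i = true) (hi' : m'.testBit i = true) : m = m' := by
  rcases hm with ⟨x, y, z, h, rfl⟩ | ⟨x, y, h, rfl⟩ <;>
  rcases hm' with ⟨x', y', z', h', rfl⟩ | ⟨x', y', h', rfl⟩
  · obtain ⟨a, b, c, hR, e, hi⟩ := exists_of_testBit_tripleMask h1 h2 h hi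
    obtain ⟨a', b', c', hR', eq2, hi'⟩ := exists_of_testBit_tripleMask h1 h2 h' hi'
    obtain rfl : a = a' := by omega
    obtain rfl : b = b' := by omega
    obtain rfl := hu _ _ _ _ hR hR'
    rw [e, eq2]
  · obtain ⟨a, b, c, hR, e, hi⟩ := exists_of_testBit_tripleMask h1 h2 h hi
    obtain ⟨a', b', hR', eq2, hi'⟩ := exists_of_testBit_leaveMask hL h' hi'
    have := hne _ _ _ hR
    rcases hi' with hi' | hi'
    · obtain rfl : a = a' := by omega
      obtain rfl : b = b' := by omega
      exact absurd hR' (hRL _ _ _ hR)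
    · omega
  · obtain ⟨a, b, c, hR, e, hi'⟩ := exists_of_testBit_tripleMask h1 h2 h' hi'
    obtain ⟨a', b', hR', eq2, hi⟩ := exists_of_testBit_leaveMask hL h hi
    have := hne _ _ _ hR
    rcases hi with hi | hi
    · obtain rfl : a = a' := by omega
      obtain rfl : b = b' := by omega
      exact absurd hR' (hRL _ _ _ hR)
    · omega
  · obtain ⟨a, b, hR, e, hi⟩ := exists_of_testBit_leaveMask hL h hi
    obtain ⟨a', b', hR', eq2, hi'⟩ := exists_of_testBit_leaveMask hL h' hi'
    have := hLne _ _ hR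
    have := hLne _ _ hR'
    obtain rfl : a = a' := by omega
    obtain rfl := hLu _ _ _ hR hR'
    rw [e, eq2]
end

/-- The mask `u` is a union of masks satisfying `C`. -/
def UnionOf (C : ℕ → Prop) (u : ℕ) : Prop :=
  ∀ i, u.testBit i = true → ∃ m, C m ∧ m.testBit i = true ∧ ∀ j, m.testBit j = true → u.testBit j = true

theorem UnionOf.zero (C : ℕ → Prop) : UnionOf C 0 := by
  intro i hi
  simp at hi

theorem UnionOf.or {C : ℕ → Prop} {u m : ℕ} (hu : UnionOf C u) (hm : C m) : UnionOf C (u ||| m) := by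
  intro i hi
  simp only [Nat.testBit_or, Bool.or_eq_true] at hi ⊢
  rcases hi with hi | hi
  · obtain ⟨m', h1, h2, h3⟩ := hu i hi
    exact ⟨m', h1, h2, fun j hj => .inl (h3 j hj)⟩
  · exact ⟨m, hm, hi, fun j hj => .inr hj⟩

/-- When the masks in `C` are pairwise disjoint, a mask in `C` not contained in `u` is disjoint from
`u`. -/
theorem UnionOf.disjoint {C : ℕ → Prop}
    (hC : ∀ m m' i, C m → C m' → m.testBit i = true → m'.testBit i = true → m = m')
    {u m i : ℕ} (hu : UnionOf C u) (hm : C m) (hi : m.testBit i = true)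
    (hui : ¬ u.testBit i = true) : m &&& u = 0 := by
  by_contra h0
  obtain ⟨j, hj⟩ := Nat.exists_testBit_of_ne_zero h0
  simp only [Nat.testBit_and, Bool.and_eq_true] at hj
  obtain ⟨m', h1, h2, h3⟩ := hu j hj.2
  obtain rfl := hC m m' j hm h1 hj.1 h2
  exact hui (h3 i hi)

/-- Completeness of the search: if a system of triples `R` and leave edges `L` covers all pairs, the
search succeeds from any partial union of its blocks. -/
theorem extendable_of_chosen {R : Fin 12 → Fin 12 → Fin 12 → Prop} {L : Fin 12 → Fin 12 → Prop}
    (hC : ∀ m m' i, Chosen R L m → Chosen R L m' → m.testBit i = true → m'.testBit i = true → m = m')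
    (hne : ∀ x y z, R x y z → z ≠ x ∧ z ≠ y)
    (hcov : ∀ x y, x ≠ y → (∃ z, R x y z) ∨ L x y) :
    ∀ (l : List (ℕ × ℕ)), (∀ p ∈ l, p.1 < 12 ∧ p.2 < 12 ∧ p.1 ≠ p.2) →
      ∀ u, UnionOf (Chosen R L) u → extendable l u = true := by
  intro l
  induction l with
  | nil => intros; rfl
  | cons p r ih =>
    obtain ⟨x, y⟩ := p
    intro hl u hu
    have ih := ih fun q hq => hl q (List.mem_cons_of_mem _ hq)
    obtain ⟨hx, hy, hxy⟩ := hl (x, y) List.mem_cons_self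
    simp only at hx hy hxy
    rw [extendable]
    split_ifs with hb
    · exact ih u hu
    · rcases hcov ⟨x, hx⟩ ⟨y, hy⟩ (by simpa using hxy) with ⟨z, hz⟩ | hL
      · have hm : Chosen R L (tripleMask x y z) := .inl ⟨_, _, _, hz, rfl⟩
        have hbit : (tripleMask x y z).testBit (12 * x + y) = true := by
          simp [tripleMask, Nat.testBit_or, testBit_edgeMask]
        have hd := UnionOf.disjoint hC hu hm hbit hb
        have := hne _ _ _ hz
        have h1 : (z : ℕ) ≠ x := fun h => this.1 (Fin.ext h)
        have h2 : (z : ℕ) ≠ y := fun h => this.2 (Fin.ext h)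
        rw [Bool.or_eq_true, List.any_eq_true]
        refine .inr ⟨z, List.mem_range.2 z.2, ?_⟩
        simp [h1, h2, hd, ih _ (hu.or hm)]
      · have hm : Chosen R L (leaveMask x y) := .inr ⟨_, _, hL, rfl⟩
        have hbit : (leaveMask x y).testBit (12 * x + y) = true := by
          simp [leaveMask, Nat.testBit_or, testBit_edgeMask]
        have hd := UnionOf.disjoint hC hu hm hbit hb
        rw [Bool.or_eq_true]
        left
        simp [hd, ih _ (hu.or hm)]

/-- No triple system on 12 points whose leave is a matching contains the rows and the columns of the
off-diagonal `4 × 4` array. `R` is the symmetric relation of being a triple, `L` the leave. -/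
theorem no_system {R : Fin 12 → Fin 12 → Fin 12 → Prop} {L : Fin 12 → Fin 12 → Prop}
    (h1 : ∀ x y z, R x y z → R y x z)
    (h2 : ∀ x y z, R x y z → R x z y) (hne : ∀ x y z, R x y z → x ≠ y)
    (hu : ∀ x y z z', R x y z → R x y z' → z = z')
    (hL : ∀ x y, L x y → L y x) (hLne : ∀ x y, L x y → x ≠ y)
    (hLu : ∀ x y y', L x y → L x y' → y = y')
    (hRL : ∀ x y z, R x y z → ¬ L x y)
    (hcov : ∀ x y, x ≠ y → (∃ z, R x y z) ∨ L x y)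
    (hr0 : R 0 1 2) (hr1 : R 3 4 5) (hr2 : R 6 7 8) (hr3 : R 9 10 11)
    (hc0 : R 5 7 9) (hc1 : R 0 8 10) (hc2 : R 1 3 11) (hc3 : R 2 4 6) : False := by
  have key := extendable_of_chosen (R := R) (L := L)
    (fun m m' i => chosen_unique h1 h2 hne hu hL hLne hLu hRL)
    (fun x y z h => ⟨(hne _ _ _ (h2 _ _ _ h)).symm, (hne _ _ _ (h2 _ _ _ (h1 _ _ _ h))).symm⟩)
    hcov pairOrder pairOrder_mem startMask ?_
  · rw [not_extendable] at key
    exact Bool.noConfusion key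
  · have hT : ∀ x y z : Fin 12, R x y z → Chosen R L (tripleMask x y z) :=
      fun x y z h => .inl ⟨x, y, z, h, rfl⟩
    exact ((((((((UnionOf.zero _).or (hT _ _ _ hr0)).or (hT _ _ _ hr1)).or (hT _ _ _ hr2)).or
      (hT _ _ _ hr3)).or (hT _ _ _ hc0)).or (hT _ _ _ hc1)).or (hT _ _ _ hc2)).or (hT _ _ _ hc3)

/-! ### Packings as coloured families of triples -/

/-- A family `b` of triples on 12 points, pairwise sharing at most one point, with a colouring `c` in
which triples of equal colour are disjoint. -/
structure IsColouredTriples {n v : ℕ} (b : Fin n → Finset (Fin 12)) (c : Fin n → Fin v) : Prop where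
  card_eq : ∀ i, (b i).card = 3
  card_inter : ∀ i j, i ≠ j → (b i ∩ b j).card ≤ 1
  disjoint : ∀ i j, i ≠ j → c i = c j → Disjoint (b i) (b j)

/-- The tuple `(s, t)` as a dependent function on `Fin 2`. -/
def toTuple {v : ℕ} (s : Finset (Fin 12)) (t : Finset (Fin v)) :
    ∀ i : Fin 2, Finset (Fin (![12, v] i))
  | 0 => s
  | 1 => t

theorem card_filter_map_univ_le_one {n : ℕ} {α : Type*} {g : Fin n → α} {p : α → Prop}
    {inst : DecidablePred p} :
    (((univ : Finset (Fin n)).val.map g).filter p).card ≤ 1 ↔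
      ∀ i j, p (g i) → p (g j) → i = j := by
  rw [Multiset.filter_map, Multiset.card_map]
  change #{i | p (g i)} ≤ 1 ↔ _
  rw [Finset.card_le_one]
  simp only [Finset.mem_filter_univ]
  exact ⟨fun h i j hi hj => h i hi j hj, fun h i hi j hj => h i j hi hj⟩

theorem exists_map_univ {α : Type*} (P : Multiset α) :
    ∃ g : Fin (Multiset.card P) → α, P = (univ : Finset (Fin (Multiset.card P))).val.map g := by
  induction P using Quotient.inductionOn with
  | h l =>
    exact ⟨l.get, ((Fin.univ_val_map l.get).trans
      (congrArg (fun l' : List α => (l' : Multiset α)) (List.ofFn_get l))).symm⟩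

theorem exists_colouredTriples {v : ℕ} {P : Multiset (∀ i : Fin 2, Finset (Fin (![12, v] i)))}
    (hP : IsGenPacking 2 1 ![12, v] ![3, 1] P) :
    ∃ (b : Fin (Multiset.card P) → Finset (Fin 12)) (c : Fin (Multiset.card P) → Fin v),
      IsColouredTriples b c := by
  obtain ⟨hk, hl⟩ := hP
  obtain ⟨g, hg⟩ := exists_map_univ P
  generalize Multiset.card P = n at g hg ⊢
  subst hg
  have hmem : ∀ i, ∀ j, (g i j).card = (![3, 1] : Fin 2 → ℕ) j := fun i j =>
    hk _ (Multiset.mem_map_of_mem _ (Finset.mem_univ i)) j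
  have hc : ∀ i, ∃ x : Fin v, (g i 1 : Finset (Fin v)) = {x} := fun i =>
    Finset.card_eq_one.1 (hmem i 1)
  choose c hc using hc
  refine ⟨fun i => (g i 0 : Finset (Fin 12)), c, fun i => hmem i 0, ?_, ?_⟩
  · intro i j hij
    by_contra! hlt
    obtain ⟨T, hT, hT2⟩ := Finset.exists_subset_card_eq (show 2 ≤ _ from hlt)
    have := hl ![2, 0] (by decide) (by decide) (toTuple T ∅)
      (by intro k; fin_cases k; exacts [hT2, Finset.card_empty])
    refine hij (card_filter_map_univ_le_one.1 this i j (fun k => ?_) fun k => ?_) <;> fin_cases k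
    exacts [hT.trans Finset.inter_subset_left, Finset.empty_subset _,
      hT.trans Finset.inter_subset_right, Finset.empty_subset _]
  · intro i j hij hcc
    refine Finset.disjoint_left.2 fun x hx hx' => ?_
    have := hl ![1, 1] (by decide) (by decide) (toTuple {x} {c i})
      (by intro k; fin_cases k; exacts [Finset.card_singleton _, Finset.card_singleton _])
    refine hij (card_filter_map_univ_le_one.1 this i j (fun k => ?_) fun k => ?_) <;> fin_cases k
    · exact Finset.singleton_subset_iff.2 hx
    · exact (hc i).symm.subset
    · exact Finset.singleton_subset_iff.2 hx'
    · rw [hcc]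
      exact (hc j).symm.subset

theorem IsColouredTriples.exists_packing {n v : ℕ} {b : Fin n → Finset (Fin 12)} {c : Fin n → Fin v}
    (h : IsColouredTriples b c) :
    ∃ P, IsGenPacking 2 1 ![12, v] ![3, 1] P ∧ Multiset.card P = n := by
  refine ⟨(univ : Finset (Fin n)).val.map fun i => toTuple (b i) {c i}, ⟨?_, ?_⟩, by simp⟩
  · intro B hB k
    obtain ⟨i, -, rfl⟩ := Multiset.mem_map.1 hB
    fin_cases k
    exacts [h.card_eq i, Finset.card_singleton _]
  · intro t' ht' hsum T hT
    refine card_filter_map_univ_le_one.2 fun i j hi hj => ?_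
    by_contra hij
    have hi0 : (T 0 : Finset (Fin 12)) ⊆ b i := hi 0
    have hj0 : (T 0 : Finset (Fin 12)) ⊆ b j := hj 0
    have hi1 : (T 1 : Finset (Fin v)) ⊆ {c i} := hi 1
    have hj1 : (T 1 : Finset (Fin v)) ⊆ {c j} := hj 1
    have h0 : (T 0 : Finset (Fin 12)).card = t' 0 := hT 0
    have h1 : (T 1 : Finset (Fin v)).card = t' 1 := hT 1
    have ht1 : t' 1 ≤ 1 := ht' 1
    rw [Fin.sum_univ_two] at hsum
    have hle := (Finset.card_le_card (Finset.subset_inter hi0 hj0)).trans (h.card_inter i j hij)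
    obtain ⟨y, hy⟩ := Finset.card_pos.1 (show 0 < (T 1 : Finset (Fin v)).card by omega)
    obtain ⟨x, hx⟩ := Finset.card_pos.1 (show 0 < (T 0 : Finset (Fin 12)).card by omega)
    have hcc : c i = c j :=
      (Finset.mem_singleton.1 (hi1 hy)).symm.trans (Finset.mem_singleton.1 (hj1 hy))
    exact Finset.disjoint_left.1 (h.disjoint i j hij hcc) (hi0 hx) (hj0 hx)

/-! ### Counting bounds and full colour classes -/

namespace IsColouredTriples
variable {n v : ℕ} {b : Fin n → Finset (Fin 12)} {c : Fin n → Fin v}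

theorem index_unique (h : IsColouredTriples b c) {i j : Fin n} {x y : Fin 12} (hxy : x ≠ y)
    (hxi : x ∈ b i) (hyi : y ∈ b i) (hxj : x ∈ b j) (hyj : y ∈ b j) : i = j := by
  by_contra hij
  exact hxy (Finset.card_le_one.1 (h.card_inter i j hij) x (by simp [*]) y (by simp [*]))

/-- The triples through `x` cover two further points each, all distinct; together with a set `W` of
points not joined to `x` they fit into the 11 other points. -/
theorem two_mul_degree_add_card_le (h : IsColouredTriples b c) (x : Fin 12) (W : Finset (Fin 12))
    (hxW : x ∉ W) (hW : ∀ i, x ∈ b i → Disjoint (b i) W) :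
    2 * #{i | x ∈ b i} + W.card ≤ 11 := by
  have hcard : (({i | x ∈ b i} : Finset (Fin n)).biUnion fun i => (b i).erase x).card
      = 2 * #{i | x ∈ b i} := by
    rw [Finset.card_biUnion, Finset.sum_const_nat (m := 2), mul_comm]
    · intro i hi
      rw [Finset.card_erase_of_mem (by simpa using hi), h.card_eq]
    · intro i hi j hj hij
      rw [Function.onFun, Finset.disjoint_left]
      intro y hy hy'
      rw [Finset.mem_erase] at hy hy'
      exact hij (h.index_unique hy.1 hy.2 (by simpa using hi) hy'.2 (by simpa using hj))
  rw [← hcard, ← Finset.card_union_of_disjoint]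
  · calc _ ≤ ((univ : Finset (Fin 12)).erase x).card := by
          apply Finset.card_le_card
          intro y hy
          rw [Finset.mem_erase]
          refine ⟨?_, Finset.mem_univ _⟩
          rintro rfl
          simp [hxW] at hy
      _ = 11 := by simp
  · rw [Finset.disjoint_biUnion_left]
    intro i hi
    exact (hW i (by simpa using hi)).mono_left (Finset.erase_subset _ _)

theorem sum_degree (h : IsColouredTriples b c) : ∑ x : Fin 12, #{i | x ∈ b i} = 3 * n := by
  have := Finset.sum_card_bipartiteAbove_eq_sum_card_bipartiteBelow
    (s := (univ : Finset (Fin 12))) (t := (univ : Finset (Fin n))) (fun x i => x ∈ b i)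
  simp only [Finset.bipartiteAbove, Finset.bipartiteBelow] at this
  rw [this, Finset.sum_const_nat (m := 3)]
  · simp [mul_comm]
  · intro i _
    rw [← h.card_eq i]
    simp

theorem degree_le (h : IsColouredTriples b c) (x : Fin 12) : #{i | x ∈ b i} ≤ 5 := by
  have := h.two_mul_degree_add_card_le x ∅ (by simp) (by simp)
  simp only [Finset.card_empty] at this
  omega

theorem le_twenty (h : IsColouredTriples b c) : n ≤ 20 := by
  have h1 := h.sum_degree
  have h2 : ∑ x : Fin 12, #{i | x ∈ b i} ≤ ∑ _x : Fin 12, 5 :=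
    Finset.sum_le_sum fun x _ => h.degree_le x
  simp at h2
  omega

theorem card_class (h : IsColouredTriples b c) (a : Fin v) :
    (({i | c i = a} : Finset (Fin n)).biUnion b).card = 3 * #{i | c i = a} := by
  rw [Finset.card_biUnion, Finset.sum_const_nat (m := 3), mul_comm]
  · exact fun i _ => h.card_eq i
  · intro i hi j hj hij
    exact h.disjoint i j hij (by simp at hi hj; rw [hi, hj])

theorem class_le (h : IsColouredTriples b c) (a : Fin v) : #{i | c i = a} ≤ 4 := by
  have h1 := h.card_class a
  have h2 := Finset.card_le_univ (({i | c i = a} : Finset (Fin n)).biUnion b)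
  rw [Fintype.card_fin] at h2
  omega

theorem sum_class (c : Fin n → Fin v) : ∑ a : Fin v, #{i | c i = a} = n := by
  have := Finset.card_eq_sum_card_fiberwise (f := c) (s := univ) (t := univ) (by simp)
  simpa using this.symm

theorem le_four_mul (h : IsColouredTriples b c) : n ≤ 4 * v := by
  have h1 := sum_class c
  have h2 : ∑ a : Fin v, #{i | c i = a} ≤ ∑ _a : Fin v, 4 :=
    Finset.sum_le_sum fun a _ => h.class_le a
  simp at h2
  omega

theorem exists_two_full (h : IsColouredTriples b c) (hn : n = 20) (hv : v ≤ 6) :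
    ∃ a a' : Fin v, a ≠ a' ∧ #{i | c i = a} = 4 ∧ #{i | c i = a'} = 4 := by
  have h1 := sum_class c
  -- With `f` full classes, `20 ≤ 3 v + f ≤ 18 + f`.
  have h2 : ∑ a : Fin v, #{i | c i = a} ≤ ∑ a : Fin v, (3 + if #{i | c i = a} = 4 then 1 else 0) :=
    Finset.sum_le_sum fun a _ => by
      have := h.class_le a
      split_ifs <;> omega
  rw [Finset.sum_add_distrib, ← Finset.card_filter] at h2
  simp only [Finset.sum_const, Finset.card_univ, Fintype.card_fin, smul_eq_mul] at h2
  obtain ⟨a, ha, a', ha', hne⟩ := Finset.one_lt_card.1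
    (show 1 < #{a : Fin v | #{i | c i = a} = 4} by omega)
  exact ⟨a, a', hne, by simpa using ha, by simpa using ha'⟩

theorem exists_enum (h : IsColouredTriples b c) {a : Fin v} (ha : #{i | c i = a} = 4) :
    ∃ f : Fin 4 → Fin n, (∀ k, c (f k) = a) ∧ Function.Injective f ∧ ∀ x, ∃ k, x ∈ b (f k) := by
  let e := Finset.orderIsoOfFin _ ha
  refine ⟨fun k => e k, fun k => ?_, fun k l hkl => e.injective (Subtype.ext hkl), fun x => ?_⟩
  · exact (Finset.mem_filter.1 (e k).2).2
  -- Four disjoint triples exhaust the 12 points.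
  · have h1 : ({i | c i = a} : Finset (Fin n)).biUnion b = univ := by
      rw [← Finset.card_eq_iff_eq_univ, h.card_class, ha, Fintype.card_fin]
    have h2 : x ∈ ({i | c i = a} : Finset (Fin n)).biUnion b := h1 ▸ Finset.mem_univ x
    obtain ⟨i, hi, hx⟩ := Finset.mem_biUnion.1 h2
    exact ⟨e.symm ⟨i, hi⟩, by simpa using hx⟩

end IsColouredTriples

/-! ### Labelling two full classes -/

/-- A `4 × 4` zero-one matrix with all row and column sums 3 is, up to a permutation of the columns,
the complement of the identity matrix. -/
theorem exists_perm_of_sums (M : Fin 4 → Fin 4 → ℕ) (hM : ∀ i j, M i j ≤ 1)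
    (hr : ∀ i, ∑ j, M i j = 3) (hc : ∀ j, ∑ i, M i j = 3) :
    ∃ σ : Fin 4 → Fin 4, Function.Injective σ ∧ ∀ i j, i ≠ j → M i (σ j) = 1 := by
  have hz : ∀ i, ∃ j, M i j = 0 := by
    intro i
    by_contra! hcon
    have := hr i
    rw [Fin.sum_univ_four] at this
    have := hcon 0
    have := hcon 1
    have := hcon 2
    have := hcon 3
    omega
  choose σ hσ using hz
  have key : ∀ i j, i ≠ j → M i (σ j) = 1 := by
    intro i j hij
    have h1 := hc (σ j)
    have h2 := hσ j
    have h3 := fun k => hM k (σ j)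
    generalize σ j = s at *
    rw [Fin.sum_univ_four] at h1
    have := h3 0
    have := h3 1
    have := h3 2
    have := h3 3
    fin_cases i <;> fin_cases j <;>
      simp only [Fin.zero_eta, Fin.mk_one, Fin.reduceFinMk, ne_eq, not_true_eq_false] at hij h2 ⊢ <;>
      omega
  refine ⟨σ, fun i j hij => ?_, key⟩
  by_contra hne
  have h1 := key i j hne
  have h2 := hσ i
  rw [hij] at h2
  omega

theorem sum_card_inter (s : Finset (Fin 12)) (B : Fin 4 → Finset (Fin 12))
    (hB : ∀ i j, i ≠ j → Disjoint (B i) (B j)) (hcov : ∀ x, ∃ k, x ∈ B k) :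
    ∑ j, (s ∩ B j).card = s.card := by
  rw [← Finset.card_biUnion]
  · congr 1
    ext x
    obtain ⟨k, hk⟩ := hcov x
    simp only [Finset.mem_biUnion, Finset.mem_univ, true_and, Finset.mem_inter]
    exact ⟨fun ⟨_, h, _⟩ => h, fun h => ⟨k, h, hk⟩⟩
  · intro i _ j _ hij
    exact (hB i j hij).mono Finset.inter_subset_right Finset.inter_subset_right

/-- Row of the `k`-th off-diagonal cell of a `4 × 4` array. -/
def cellRow (k : Fin 12) : Fin 4 := ⟨k / 3, by omega⟩

/-- Column of the `k`-th off-diagonal cell of a `4 × 4` array; the cells of row `i` are listed from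
column `i + 1` cyclically. -/
def cellCol (k : Fin 12) : Fin 4 := ⟨(k / 3 + 1 + k % 3) % 4, by omega⟩

/-- Two partitions `A`, `B` of 12 points into triples meeting in at most one point are the rows and
the columns of the off-diagonal `4 × 4` array, after labelling the points by `e` and the parts of
`B` by `σ`. -/
theorem exists_labelling (A B : Fin 4 → Finset (Fin 12))
    (hA : ∀ i j, i ≠ j → Disjoint (A i) (A j)) (hAcov : ∀ x, ∃ k, x ∈ A k)
    (hA3 : ∀ i, (A i).card = 3)
    (hB : ∀ i j, i ≠ j → Disjoint (B i) (B j)) (hBcov : ∀ x, ∃ k, x ∈ B k)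
    (hB3 : ∀ i, (B i).card = 3)
    (hAB : ∀ i j, (A i ∩ B j).card ≤ 1) :
    ∃ (σ : Fin 4 → Fin 4) (e : Fin 12 → Fin 12), Function.Injective e ∧
      ∀ k, e k ∈ A (cellRow k) ∧ e k ∈ B (σ (cellCol k)) := by
  obtain ⟨σ, hσ, h1⟩ := exists_perm_of_sums (fun i j => (A i ∩ B j).card) hAB
    (fun i => by rw [sum_card_inter _ _ hB hBcov, hA3])
    (fun j => by
      simp only [Finset.inter_comm _ (B j)]
      rw [sum_card_inter _ _ hA hAcov, hB3])
  have hne : ∀ k : Fin 12, cellRow k ≠ cellCol k := by decide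
  have hex : ∀ k : Fin 12, ∃ x, x ∈ A (cellRow k) ∩ B (σ (cellCol k)) := fun k =>
    Finset.card_pos.1 (by have := h1 _ _ (hne k); omega)
  choose e he using hex
  refine ⟨σ, e, fun k l hkl => ?_, fun k => Finset.mem_inter.1 (he k)⟩
  have hk := Finset.mem_inter.1 (he k)
  have hl := Finset.mem_inter.1 (he l)
  rw [← hkl] at hl
  have hrow : cellRow k = cellRow l := by
    by_contra hcon
    exact Finset.disjoint_left.1 (hA _ _ hcon) hk.1 hl.1
  have hcol : cellCol k = cellCol l := by
    by_contra hcon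
    exact Finset.disjoint_left.1 (hB _ _ (hσ.ne hcon)) hk.2 hl.2
  have : ∀ k l : Fin 12, cellRow k = cellRow l → cellCol k = cellCol l → k = l := by decide
  exact this k l hrow hcol

theorem IsColouredTriples.ne_twenty {n v : ℕ} {b : Fin n → Finset (Fin 12)} {c : Fin n → Fin v}
    (h : IsColouredTriples b c) (hv : v ≤ 6) : n ≠ 20 := by
  intro hn
  obtain ⟨a, a', haa, ha, ha'⟩ := h.exists_two_full hn hv
  obtain ⟨f, hf, hfi, hfc⟩ := h.exists_enum ha
  obtain ⟨g, hg, hgi, hgc⟩ := h.exists_enum ha'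
  obtain ⟨σ, e, he, hfg⟩ := exists_labelling (fun i => b (f i)) (fun i => b (g i))
    (fun i j hij => h.disjoint _ _ (hfi.ne hij) (by rw [hf, hf])) hfc (fun i => h.card_eq _)
    (fun i j hij => h.disjoint _ _ (hgi.ne hij) (by rw [hg, hg])) hgc (fun i => h.card_eq _)
    (fun i j => h.card_inter _ _ fun hij => haa (by rw [← hf i, ← hg j, hij]))
  have hes : Function.Surjective e := Finite.surjective_of_injective he
  have hdeg : ∀ x, #{i | x ∈ b i} = 5 := by
    have h1 : ∑ x : Fin 12, #{i | x ∈ b i} = ∑ _x : Fin 12, 5 := by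
      rw [h.sum_degree, hn]
      simp
    intro x
    exact (Finset.sum_eq_sum_iff_of_le fun x _ => h.degree_le x).1 h1 x (Finset.mem_univ x)
  have hR : ∀ i x y z, x ≠ y → x ≠ z → y ≠ z → e x ∈ b i → e y ∈ b i → e z ∈ b i →
      b i = {e x, e y, e z} := by
    intro i x y z hxy hxz hyz hx hy hz
    symm
    apply Finset.eq_of_subset_of_card_le
    · intro w hw
      simp only [Finset.mem_insert, Finset.mem_singleton] at hw
      rcases hw with rfl | rfl | rfl <;> assumption
    · rw [h.card_eq, Finset.card_eq_three.2 ⟨_, _, _, he.ne hxy, he.ne hxz, he.ne hyz, rfl⟩]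
  have hrow : ∀ x y z : Fin 12, x ≠ y → x ≠ z → y ≠ z → cellRow x = cellRow y →
      cellRow x = cellRow z →
      x ≠ y ∧ x ≠ z ∧ y ≠ z ∧ ∃ i, e x ∈ b i ∧ e y ∈ b i ∧ e z ∈ b i := by
    intro x y z h1 h2 h3 h4 h5
    exact ⟨h1, h2, h3, f (cellRow x), (hfg x).1, h4 ▸ (hfg y).1, h5 ▸ (hfg z).1⟩
  have hcol : ∀ x y z : Fin 12, x ≠ y → x ≠ z → y ≠ z → cellCol x = cellCol y →
      cellCol x = cellCol z →
      x ≠ y ∧ x ≠ z ∧ y ≠ z ∧ ∃ i, e x ∈ b i ∧ e y ∈ b i ∧ e z ∈ b i := by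
    intro x y z h1 h2 h3 h4 h5
    exact ⟨h1, h2, h3, g (σ (cellCol x)), (hfg x).2, h4 ▸ (hfg y).2, h5 ▸ (hfg z).2⟩
  refine no_system
    (R := fun x y z => x ≠ y ∧ x ≠ z ∧ y ≠ z ∧ ∃ i, e x ∈ b i ∧ e y ∈ b i ∧ e z ∈ b i)
    (L := fun x y => x ≠ y ∧ ∀ i, ¬ (e x ∈ b i ∧ e y ∈ b i))
    ?_ ?_ ?_ ?_ ?_ ?_ ?_ ?_ ?_ (hrow _ _ _ ?_ ?_ ?_ ?_ ?_) (hrow _ _ _ ?_ ?_ ?_ ?_ ?_)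
    (hrow _ _ _ ?_ ?_ ?_ ?_ ?_) (hrow _ _ _ ?_ ?_ ?_ ?_ ?_) (hcol _ _ _ ?_ ?_ ?_ ?_ ?_)
    (hcol _ _ _ ?_ ?_ ?_ ?_ ?_) (hcol _ _ _ ?_ ?_ ?_ ?_ ?_) (hcol _ _ _ ?_ ?_ ?_ ?_ ?_)
  case refine_1 =>
    rintro x y z ⟨h1, h2, h3, i, hx, hy, hz⟩
    exact ⟨h1.symm, h3, h2, i, hy, hx, hz⟩
  case refine_2 =>
    rintro x y z ⟨h1, h2, h3, i, hx, hy, hz⟩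
    exact ⟨h2, h1, h3.symm, i, hx, hz, hy⟩
  case refine_3 => exact fun x y z h => h.1
  case refine_4 =>
    rintro x y z z' ⟨h1, h2, h3, i, hx, hy, hz⟩ ⟨-, h2', h3', j, hx', hy', hz'⟩
    obtain rfl := h.index_unique (he.ne h1) hx hy hx' hy'
    rw [hR i x y z h1 h2 h3 hx hy hz] at hz'
    simp only [Finset.mem_insert, Finset.mem_singleton, he.eq_iff] at hz'
    rcases hz' with hz' | hz' | hz'
    exacts [absurd hz'.symm h2', absurd hz'.symm h3', hz'.symm]
  case refine_5 => exact fun x y h => ⟨h.1.symm, fun i hi => h.2 i hi.symm⟩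
  case refine_6 => exact fun x y h => h.1
  case refine_7 =>
    -- Two points not joined to `e x` would leave only 9 points for its 5 triples.
    rintro x y y' ⟨h1, h2⟩ ⟨h1', h2'⟩
    by_contra hyy
    have := h.two_mul_degree_add_card_le (e x) {e y, e y'}
      (by simp [he.eq_iff, h1, h1'])
      (by
        intro i hi
        simp only [Finset.disjoint_insert_right, Finset.disjoint_singleton_right]
        exact ⟨fun hy => h2 i ⟨hi, hy⟩, fun hy => h2' i ⟨hi, hy⟩⟩)
    rw [hdeg, Finset.card_pair (he.ne hyy)] at this
    omega
  case refine_8 =>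
    rintro x y z ⟨-, -, -, i, hx, hy, -⟩ ⟨-, hL⟩
    exact hL i ⟨hx, hy⟩
  case refine_9 =>
    intro x y hxy
    by_cases hex : ∃ i, e x ∈ b i ∧ e y ∈ b i
    · obtain ⟨i, hx, hy⟩ := hex
      left
      obtain ⟨w, hw⟩ : (((b i).erase (e x)).erase (e y)).Nonempty := by
        rw [← Finset.card_pos, Finset.card_erase_of_mem, Finset.card_erase_of_mem hx, h.card_eq]
        · omega
        · exact Finset.mem_erase.2 ⟨(he.ne hxy).symm, hy⟩
      obtain ⟨z, rfl⟩ := hes w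
      simp only [Finset.mem_erase, ne_eq, he.eq_iff] at hw
      exact ⟨z, hxy, fun h => hw.2.1 h.symm, fun h => hw.1 h.symm, i, hx, hy, hw.2.2⟩
    · right
      push Not at hex
      exact ⟨hxy, fun i hi => hex i hi.1 hi.2⟩
  all_goals decide

/-! ### Constructions and conclusion -/

/-- Nineteen pairwise edge-disjoint triples; consecutive groups of four (three in the last one)
consist of disjoint triples. -/
def triples19 : Fin 19 → Finset (Fin 12) :=
  ![{0, 1, 9}, {2, 6, 11}, {3, 7, 10}, {4, 5, 8},
    {0, 2, 5}, {1, 4, 10}, {3, 9, 11}, {6, 7, 8},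
    {0, 8, 11}, {1, 5, 7}, {2, 3, 4}, {6, 9, 10},
    {0, 4, 6}, {1, 3, 8}, {2, 7, 9}, {5, 10, 11},
    {2, 8, 10}, {4, 7, 11}, {3, 5, 6}]

/-- The first `n` triples of `triples19`, where the `i`-th one gets colour `⌊i / 4⌋`. -/
theorem exists_of_le_nineteen {n v : ℕ} (hn : n ≤ 19) (hnv : n ≤ 4 * v) :
    ∃ (b : Fin n → Finset (Fin 12)) (c : Fin n → Fin v), IsColouredTriples b c := by
  have h1 : ∀ i, (triples19 i).card = 3 := by decide +kernel
  have h2 : ∀ i j, i ≠ j → (triples19 i ∩ triples19 j).card ≤ 1 := by decide +kernel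
  have h3 : ∀ i j : Fin 19, i ≠ j → (i : ℕ) / 4 = (j : ℕ) / 4 →
      Disjoint (triples19 i) (triples19 j) := by decide +kernel
  have hinj := Fin.castLE_injective hn
  refine ⟨fun i => triples19 (Fin.castLE hn i), fun i => ⟨i / 4, by omega⟩, fun i => h1 _,
    fun i j hij => h2 _ _ (hinj.ne hij), fun i j hij hc => h3 _ _ (hinj.ne hij) ?_⟩
  simpa using hc

/-- Twenty pairwise edge-disjoint triples; consecutive groups of three (two in the last one) consist
of disjoint triples. -/
def triples20 : Fin 20 → Finset (Fin 12) :=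
  ![{1, 4, 11}, {0, 5, 6}, {7, 8, 10},
    {0, 9, 10}, {3, 6, 11}, {2, 4, 8},
    {0, 2, 11}, {1, 5, 9}, {4, 6, 10},
    {7, 9, 11}, {0, 3, 8}, {1, 2, 10},
    {1, 6, 8}, {2, 5, 7}, {3, 4, 9},
    {5, 8, 11}, {2, 6, 9}, {1, 3, 7},
    {3, 5, 10}, {0, 4, 7}]

theorem exists_twenty {v : ℕ} (hv : 7 ≤ v) :
    ∃ (b : Fin 20 → Finset (Fin 12)) (c : Fin 20 → Fin v), IsColouredTriples b c := by
  have h1 : ∀ i, (triples20 i).card = 3 := by decide +kernel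
  have h2 : ∀ i j, i ≠ j → (triples20 i ∩ triples20 j).card ≤ 1 := by decide +kernel
  have h3 : ∀ i j : Fin 20, i ≠ j → (i : ℕ) / 3 = (j : ℕ) / 3 →
      Disjoint (triples20 i) (triples20 j) := by decide +kernel
  refine ⟨triples20, fun i => ⟨i / 3, by omega⟩, h1, h2, fun i j hij hc => h3 _ _ hij ?_⟩
  simpa using hc

theorem genPackingNumber_eq_s10 {v N : ℕ}
    (hex : ∃ (b : Fin N → Finset (Fin 12)) (c : Fin N → Fin v), IsColouredTriples b c)
    (hle : ∀ (n : ℕ) (b : Fin n → Finset (Fin 12)) (c : Fin n → Fin v),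
      IsColouredTriples b c → n ≤ N) :
    genPackingNumber (Fin 2) 2 1 ![12, v] ![3, 1] = N := by
  obtain ⟨b, c, hbc⟩ := hex
  refine IsGreatest.csSup_eq ⟨hbc.exists_packing, ?_⟩
  rintro n ⟨P, hP, rfl⟩
  obtain ⟨b, c, h⟩ := exists_colouredTriples hP
  exact hle _ b c h

/-- the generalized packing numbers for `𝐯 = (12,v₂)` and `𝐤 = (3,1)`. -/
theorem stmt10 (v₂ : ℕ) (h : 1 ≤ v₂) :
    (v₂ ≤ 4 → genPackingNumber (Fin 2) 2 1 ![12, v₂] ![3, 1] = 4 * v₂) ∧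
    (v₂ = 5 ∨ v₂ = 6 → genPackingNumber (Fin 2) 2 1 ![12, v₂] ![3, 1] = 19) ∧
    (7 ≤ v₂ → genPackingNumber (Fin 2) 2 1 ![12, v₂] ![3, 1] = 20) := by
  refine ⟨fun hv => ?_, fun hv => ?_, fun hv => ?_⟩
  · exact genPackingNumber_eq_s10 (exists_of_le_nineteen (by omega) le_rfl)
      fun n b c hbc => hbc.le_four_mul
  · refine genPackingNumber_eq_s10 (exists_of_le_nineteen le_rfl (by omega)) fun n b c hbc => ?_
    have h1 := hbc.le_twenty
    have h2 := hbc.ne_twenty (by omega)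
    omega
  · exact genPackingNumber_eq_s10 (exists_twenty hv) fun n b c hbc => hbc.le_twenty
end
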